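/- arXiv:2106.06710 — 2 statements merged into one kernel-verified Lean document; each statement's English description precedes it below -/
import Mathlib

section
/- In the cycle-plus-tree setting, suppose G is periodic and deg(v_1)=…=deg(v_t)=2, deg(w_1)=…=deg(w_t)=2. Then for every 1 ≤ i ≤ t: (1) 2^{2i}·K_{2i} is an integer; (2) 2^{2(i−1)−1}·L_{2(i−1)}(2) is an integer; and (3) for every 2 ≤ j ≤ i−1, 2^{2(i−j)−1}·L_{2(i−j)}(2,…,j+1) is an integer. -/
open Matrix

attribute [local instance] Classical.propDecidable

namespace GroverPaper

variable {V : Type*}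

/-- The arc set of a simple graph: ordered pairs of adjacent vertices. -/
abbrev Arc (G : SimpleGraph V) : Type _ := {p : V × V // G.Adj p.1 p.2}

/-- The time evolution matrix of the Grover walk on a graph `G`. -/
noncomputable def groverU [Fintype V] (G : SimpleGraph V) :
    Matrix (Arc G) (Arc G) ℂ := fun e f =>
  if f.val.2 = e.val.1 then
    if e.val = (f.val.2, f.val.1) then 2 / (G.degree f.val.2 : ℂ) - 1
    else 2 / (G.degree f.val.2 : ℂ)
  else 0

/-- A graph is periodic if some positive power of its Grover evolution is the identity. -/
def IsPeriodic [Fintype V] (G : SimpleGraph V) : Prop :=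
  ∃ k : ℕ, 0 < k ∧ groverU G ^ k = 1

/-- The period of a periodic graph: the least positive `k` with `U^k = 1`. -/
noncomputable def period [Fintype V] (G : SimpleGraph V) : ℕ :=
  sInf {k : ℕ | 0 < k ∧ groverU G ^ k = 1}

/-- A graph is `k`-periodic if it is periodic with period `k`. -/
def IsKPeriodic [Fintype V] (G : SimpleGraph V) (k : ℕ) : Prop :=
  IsPeriodic G ∧ period G = k

/-- A graph is odd-periodic if it is periodic with odd period. -/
def IsOddPeriodic [Fintype V] (G : SimpleGraph V) : Prop :=
  IsPeriodic G ∧ Odd (period G)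

/-- The transition matrix of the isotropic random walk on `G`. -/
noncomputable def transition [Fintype V] (G : SimpleGraph V) :
    Matrix V V ℝ := fun u v =>
  if G.Adj u v then 1 / (G.degree u : ℝ) else 0

/-- `M(e) = 1/(deg x · deg y)` for an edge `e = xy`. -/
noncomputable def edgeM [Fintype V] (G : SimpleGraph V) : Sym2 V → ℝ :=
  Sym2.lift ⟨fun x y => 1 / ((G.degree x : ℝ) * (G.degree y : ℝ)), fun x y => by simp [mul_comm]⟩

/-- The sum, over all `i`-matchings contained in the edge collection `A`, of the product of
the `M`-values of the matching. (For `i = 0` this is `1`; if there is no such matching it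
is `0`.) -/
noncomputable def matchSum [Fintype V] (G : SimpleGraph V) (A : Finset (Sym2 V)) (i : ℕ) : ℝ :=
  ∑ S ∈ A.powerset.filter (fun S => S.card = i ∧
      ∀ e ∈ S, ∀ f ∈ S, e ≠ f → ∀ x : V, ¬(x ∈ e ∧ x ∈ f)),
    ∏ e ∈ S, edgeM G e

/-- The edges of `G` that neither lie on the cycle `c 0 ∼ c 1 ∼ … ∼ c (k-1) ∼ c 0` nor are
incident to `u = c 0`; this is the edge set `E_T` of the paper. -/
noncomputable def treeEdges [Fintype V] {k : ℕ} (G : SimpleGraph V) (c : ZMod k → V) :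
    Finset (Sym2 V) :=
  G.edgeFinset.filter fun e => (∀ i : ZMod k, e ≠ s(c i, c (i + 1))) ∧ c 0 ∉ e

/-- `K_{2i}` of the paper: the sum over all `i`-matchings in `E_T` of the products of the
`M`-values. -/
noncomputable def Km [Fintype V] {k : ℕ} (G : SimpleGraph V) (c : ZMod k → V) (i : ℕ) : ℝ :=
  matchSum G (treeEdges G c) i

/-- `K^g_{2i}(2,…,r)` of the paper, where `v` is the path `u = v 0, v 1, v 2, …` so that
`g_j = v_{j-1} v_j`: the sum over all `i`-matchings in `E_T ∖ {g_2,…,g_r}`. -/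
noncomputable def Kg [Fintype V] {k : ℕ} (G : SimpleGraph V) (c : ZMod k → V)
    (v : ℕ → V) (i r : ℕ) : ℝ :=
  matchSum G (treeEdges G c \ (Finset.Icc 2 r).image fun j => s(v (j - 1), v j)) i

/-- `L_{2i}(2,…,r) = K^g_{2i}(2,…,r) + K^h_{2i}(2,…,r)` of the paper. -/
noncomputable def Lm [Fintype V] {k : ℕ} (G : SimpleGraph V) (c : ZMod k → V)
    (v w : ℕ → V) (i r : ℕ) : ℝ :=
  Kg G c v i r + Kg G c w i r

/-!
If the Grover walk is periodic then every eigenvalue of `2 P`, where `P` is the transition matrix,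
is an algebraic integer, so the reversed characteristic polynomial `det (1 - 2 X P)` has integer
coefficients. A permutation contributing to this determinant is either an involution along edges,
that is, a matching, or a rotation of the cycle in one of the two directions combined with a
matching of the edges off the cycle. As `k` is odd, the two kinds of terms live in degrees of
different parity, so the matching polynomials of `G` and of its tree part are integral separately.

Expanding the matching polynomial of `G` at `u = c 0` produces an integral combination of the
matching polynomial of the tree part, plus `X (g₂ + h₂) / 2` times the matching polynomial of
the cycle edges off `u`, whose constant term is `1`. Here `g_r` and `h_r` are the matching
polynomials of the tree part pruned up to the `r`-th thread edge. Hence `(g₂ + h₂) / 2` is integral.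
Along a thread all weights are `1`, so deleting its edges one at a time gives
`g_r = g_(r+1) + X g_(r+2)`, which propagates integrality to all `(g_r + h_r) / 2`.
-/

section IntegralCoefficients

open Polynomial

variable {R S : Type*}

theorem mem_lifts_of_X_mul_mem [Semiring R] [Semiring S] {f : R →+* S} {p : S[X]}
    (h : X * p ∈ lifts f) : p ∈ lifts f := by
  rw [lifts_iff_coeff_lifts] at h ⊢
  exact fun n => by simpa only [coeff_X_mul] using h (n + 1)

theorem mem_lifts_of_add_mem [Ring R] [Ring S] {f : R →+* S} {p q : S[X]} (hp : p ∈ lifts f)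
    (h : p + q ∈ lifts f) : q ∈ lifts f := by
  rw [lifts_iff_liftsRing] at hp h ⊢
  exact ((liftsRing f).add_mem_cancel_left hp).1 h

theorem mem_lifts_of_mul_mem [Ring R] [Ring S] {f : R →+* S} {p q : S[X]} (hp : p ∈ lifts f)
    (hp0 : p.coeff 0 = 1) (h : p * q ∈ lifts f) : q ∈ lifts f := by
  rw [lifts_iff_coeff_lifts] at hp h ⊢
  intro n
  induction n using Nat.strong_induction_on with
  | _ n ih =>
    have hsum : ∑ i ∈ Finset.range n, p.coeff (i + 1) * q.coeff (n - (i + 1)) ∈ f.range :=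
      Subring.sum_mem _ fun i hi =>
        Subring.mul_mem _ (hp (i + 1)) (ih _ (by have := Finset.mem_range.1 hi; omega))
    have hcoeff : q.coeff n = (p * q).coeff n -
        ∑ i ∈ Finset.range n, p.coeff (i + 1) * q.coeff (n - (i + 1)) := by
      rw [coeff_mul, Finset.Nat.sum_antidiagonal_eq_sum_range_succ_mk, Finset.sum_range_succ',
        hp0, one_mul, Nat.sub_zero, add_sub_cancel_left]
    rw [hcoeff]
    exact Subring.sub_mem _ (h n) hsum

theorem reverse_mem_lifts [Semiring R] [Semiring S] {f : R →+* S} {p : S[X]} (h : p ∈ lifts f) :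
    p.reverse ∈ lifts f := by
  rw [lifts_iff_coeff_lifts] at h ⊢
  exact fun n => by simpa only [coeff_reverse] using h _

theorem mem_lifts_of_comp_neg_X_mem [CommRing R] [CommRing S] {f : R →+* S} {p : S[X]}
    (h : p.comp (-X) ∈ lifts f) : p ∈ lifts f := by
  obtain ⟨q, hq⟩ := (mem_lifts _).1 h
  refine (mem_lifts _).2 ⟨q.comp (-X), ?_⟩
  rw [map_comp, hq, Polynomial.map_neg, map_X, comp_neg_X_comp_neg_X]

theorem mem_lifts_of_expand_two_sub [CommRing R] [CommRing S] {f : R →+* S} {p q : S[X]} {k : ℕ}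
    (hk : Odd k) (h : expand S 2 p - X ^ k * expand S 2 q ∈ lifts f) :
    p ∈ lifts f ∧ q ∈ lifts f := by
  simp only [lifts_iff_coeff_lifts] at h ⊢
  have hodd (p : S[X]) {n : ℕ} (hn : Odd n) : (expand S 2 p).coeff n = 0 := by
    rw [coeff_expand two_pos, if_neg hn.not_two_dvd_nat]
  constructor <;> intro n
  · convert h (2 * n) using 1
    rw [coeff_sub, coeff_expand_mul' two_pos, coeff_X_pow_mul']
    split_ifs
    · rw [hodd q (Nat.Even.sub_odd ‹_› (even_two_mul n) hk), sub_zero]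
    · rw [sub_zero]
  · obtain ⟨m, hm⟩ := h (2 * n + k)
    refine ⟨-m, ?_⟩
    rw [map_neg, hm, coeff_sub, hodd p ((even_two_mul n).add_odd hk), coeff_X_pow_mul,
      coeff_expand_mul' two_pos, zero_sub, neg_neg]

variable [CommRing R]

theorem isIntegral_add_pow [Ring S] [Algebra R S] {a : S} (ha : IsIntegral R a) (n : ℕ) :
    IsIntegral R (a + a ^ n) := by
  have hmem := Algebra.self_mem_adjoin_singleton R a
  exact .of_mem_of_fg (Algebra.adjoin R {a}) ha.fg_adjoin_singleton _
    (add_mem hmem (pow_mem hmem n))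

theorem isIntegral_of_mem_spectrum {K : Type*} [Field K] [Ring S] [Algebra R K] [Algebra R S]
    [Algebra K S] [IsScalarTower R K S] {a : S} (ha : IsIntegral R a) {μ : K}
    (hμ : μ ∈ spectrum K a) : IsIntegral R μ := by
  obtain ⟨p, hp, hp0⟩ := ha
  refine ⟨p, hp, ?_⟩
  have hev := spectrum.subset_polynomial_aeval a (p.map (algebraMap R K)) ⟨μ, hμ, rfl⟩
  rw [aeval_map_algebraMap, aeval_def, hp0] at hev
  by_contra hne
  refine hev ?_
  simp only [eval_map]
  rw [spectrum.mem_resolventSet_iff, sub_zero]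
  exact (IsUnit.mk0 _ hne).map (algebraMap K S)

variable {m n : Type*} [Fintype m] [DecidableEq m] [Fintype n] [DecidableEq n]

theorem aeval_mul_eq_mul_aeval [CommRing S] [Algebra R S] {A : Matrix m m S} {T : Matrix m n S}
    {B : Matrix n n S} (h : A * T = T * B) (p : R[X]) : aeval A p * T = T * aeval B p := by
  have hpow (i : ℕ) : A ^ i * T = T * B ^ i := by
    induction i with
    | zero => simp only [pow_zero, Matrix.one_mul, Matrix.mul_one]
    | succ i ih =>
      rw [pow_succ, Matrix.mul_assoc, h, ← Matrix.mul_assoc, ih, Matrix.mul_assoc, ← pow_succ]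
  simp only [aeval_eq_sum_range, Matrix.sum_mul, Matrix.mul_sum, Matrix.smul_mul,
    Matrix.mul_smul, hpow]

theorem isIntegral_of_intertwining [CommRing S] [Algebra R S] {A : Matrix m m S}
    {B : Matrix n n S} (hA : IsIntegral R A) {T : Matrix m n S} {T' : Matrix n m S}
    (h : A * T = T * B) (hT : T' * T = 1) : IsIntegral R B := by
  obtain ⟨p, hp, hp0⟩ := hA
  refine ⟨p, hp, ?_⟩
  rw [← aeval_def] at hp0 ⊢
  rw [← Matrix.one_mul (aeval B p), ← hT, Matrix.mul_assoc, ← aeval_mul_eq_mul_aeval h, hp0,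
    Matrix.zero_mul, Matrix.mul_zero]

theorem isIntegral_map_iff {K L : Type*} [CommRing K] [CommRing L] [Algebra R K]
    [Algebra R L] [Algebra K L] [IsScalarTower R K L] [FaithfulSMul K L] {A : Matrix n n K} :
    IsIntegral R (A.map (algebraMap K L)) ↔ IsIntegral R A :=
  isIntegral_algHom_iff (x := A) (IsScalarTower.toAlgHom R K L).mapMatrix
    (Matrix.map_injective (FaithfulSMul.algebraMap_injective K L))

theorem isIntegral_coeff_charpoly {K : Type*} [Field K] [Algebra R K] {A : Matrix n n K}
    (hA : IsIntegral R A) (i : ℕ) : IsIntegral R (A.charpoly.coeff i) := by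
  let L := AlgebraicClosure K
  rw [← isIntegral_algebraMap_iff (algebraMap K L).injective, ← coeff_map,
    ← Matrix.charpoly_map]
  refine isIntegral_coeff_of_factors _ ?_ (IsAlgClosed.splits _) (fun μ hμ => ?_) i
  · rw [(charpoly_monic _).leadingCoeff]
    exact isIntegral_one
  · exact isIntegral_of_mem_spectrum (isIntegral_map_iff.2 hA)
      (Matrix.mem_spectrum_iff_isRoot_charpoly.2 hμ)

theorem charpoly_mem_lifts_of_isIntegral [IsIntegrallyClosed R] {K : Type*} [Field K]
    [Algebra R K] [IsFractionRing R K] {A : Matrix n n K} (hA : IsIntegral R A) :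
    A.charpoly ∈ lifts (algebraMap R K) :=
  (lifts_iff_coeff_lifts _).2 fun i =>
    IsIntegrallyClosed.isIntegral_iff.1 (isIntegral_coeff_charpoly hA i)

end IntegralCoefficients

section GroverWalk

open Polynomial

variable [Fintype V] (G : SimpleGraph V)

/-- The transition matrix of the simple random walk, with entries in an arbitrary field. -/
noncomputable def walkMatrix (K : Type*) [Field K] : Matrix V V K :=
  fun x y => if G.Adj x y then 1 / (G.degree x : K) else 0

theorem walkMatrix_map {K L : Type*} [Field K] [Field L] (f : K →+* L) :
    (walkMatrix G K).map f = walkMatrix G L := by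
  ext x y
  simp only [walkMatrix, Matrix.map_apply, apply_ite f, map_div₀, map_one, map_natCast, map_zero]

/-- The matrix sending a vertex function to its values at the heads of arcs. -/
noncomputable def headMatrix : Matrix (Arc G) V ℂ :=
  Matrix.of fun e x => if e.val.2 = x then 1 else 0

/-- The matrix sending a vertex function to its values at the tails of arcs. -/
noncomputable def tailMatrix : Matrix (Arc G) V ℂ :=
  Matrix.of fun e x => if e.val.1 = x then 1 else 0

/-- The matrix sending an arc function to its means over the arcs entering each vertex. -/
noncomputable def averageMatrix : Matrix V (Arc G) ℂ :=
  Matrix.of fun x e => if e.val.2 = x then 1 / (G.degree x : ℂ) else 0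

/-- The permutation matrix of arc reversal. -/
noncomputable def flipMatrix : Matrix (Arc G) (Arc G) ℂ :=
  Matrix.of fun e f => if e.val = (f.val.2, f.val.1) then 1 else 0

theorem groverU_eq : groverU G = (2 : ℂ) • (tailMatrix G * averageMatrix G) - flipMatrix G := by
  ext ⟨⟨a, b⟩, hab⟩ ⟨⟨a', b'⟩, hab'⟩
  simp only [groverU, Matrix.sub_apply, Matrix.smul_apply, Matrix.mul_apply, tailMatrix,
    averageMatrix, flipMatrix, Matrix.of_apply, Prod.mk.injEq, ite_mul, one_mul, zero_mul,
    Finset.sum_ite_eq, Finset.mem_univ, if_true, smul_eq_mul]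
  by_cases hhead : b' = a
  · subst hhead
    by_cases htail : b = a' <;> simp [htail, div_eq_mul_inv]
  · simp [hhead, Ne.symm hhead]

theorem averageMatrix_mul_of {n : Type*} (g : V → V → n → ℂ) (x : V) (y : n) :
    (averageMatrix G * Matrix.of fun e : Arc G => g e.val.1 e.val.2) x y =
      (∑ z ∈ G.neighborFinset x, g z x y) / G.degree x := by
  rw [Matrix.mul_apply, Finset.sum_div]
  simp only [averageMatrix, Matrix.of_apply, ite_mul, zero_mul]
  rw [← Finset.sum_filter]
  symm
  refine Finset.sum_bij
    (fun z hz => ⟨(z, x), ((G.mem_neighborFinset x z).1 hz).symm⟩) ?_ ?_ ?_ ?_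
  · simp
  · simp [Subtype.ext_iff]
  · rintro ⟨⟨a, b⟩, hab⟩ he
    obtain rfl : b = x := (Finset.mem_filter.1 he).2
    exact ⟨a, (G.mem_neighborFinset _ _).2 hab.symm, rfl⟩
  · simp [div_eq_inv_mul]

theorem averageMatrix_mul_headMatrix (hdeg : ∀ x, 0 < G.degree x) :
    averageMatrix G * headMatrix G = 1 := by
  ext x y
  have hx : (G.degree x : ℂ) ≠ 0 := Nat.cast_ne_zero.2 (hdeg x).ne'
  refine (averageMatrix_mul_of G (fun _ b y => if b = y then 1 else 0) x y).trans ?_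
  rw [Finset.sum_const, SimpleGraph.card_neighborFinset_eq_degree, nsmul_eq_mul,
    mul_div_cancel_left₀ _ hx, Matrix.one_apply]

theorem averageMatrix_mul_tailMatrix : averageMatrix G * tailMatrix G = walkMatrix G ℂ := by
  ext x y
  refine (averageMatrix_mul_of G (fun a _ y => if a = y then 1 else 0) x y).trans ?_
  rw [Finset.sum_ite_eq', walkMatrix, ite_div, zero_div]
  simp only [SimpleGraph.mem_neighborFinset]

theorem flipMatrix_mul_apply {n : Type*} (M : Matrix (Arc G) n ℂ) (e : Arc G) (x : n) :
    (flipMatrix G * M) e x = M ⟨(e.val.2, e.val.1), e.prop.symm⟩ x := by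
  rw [Matrix.mul_apply, Finset.sum_eq_single ⟨(e.val.2, e.val.1), e.prop.symm⟩]
  · simp [flipMatrix]
  · rintro ⟨⟨a, b⟩, hab⟩ _ hne
    have : e.val ≠ (b, a) := fun h => hne (by simp [h])
    simp [flipMatrix, this]
  · simp

theorem flipMatrix_mul_headMatrix : flipMatrix G * headMatrix G = tailMatrix G := by
  ext e x
  simp [flipMatrix_mul_apply, headMatrix, tailMatrix]

theorem flipMatrix_mul_tailMatrix : flipMatrix G * tailMatrix G = headMatrix G := by
  ext e x
  simp [flipMatrix_mul_apply, headMatrix, tailMatrix]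

theorem groverU_mul_headMatrix (hdeg : ∀ x, 0 < G.degree x) :
    groverU G * headMatrix G = tailMatrix G := by
  rw [groverU_eq, Matrix.sub_mul, Matrix.smul_mul, Matrix.mul_assoc,
    averageMatrix_mul_headMatrix G hdeg, Matrix.mul_one, flipMatrix_mul_headMatrix, two_smul,
    add_sub_cancel_right]

theorem groverU_mul_tailMatrix :
    groverU G * tailMatrix G = tailMatrix G * ((2 : ℂ) • walkMatrix G ℂ) - headMatrix G := by
  rw [groverU_eq, Matrix.sub_mul, Matrix.smul_mul, Matrix.mul_assoc,
    averageMatrix_mul_tailMatrix, flipMatrix_mul_tailMatrix, Matrix.mul_smul]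

variable {G}

theorem isIntegral_two_smul_walkMatrix (hdeg : ∀ x, 0 < G.degree x) (hper : IsPeriodic G) :
    IsIntegral ℤ ((2 : ℂ) • walkMatrix G ℂ) := by
  obtain ⟨N, hN, hU⟩ := hper
  set U := groverU G
  have hint : IsIntegral ℤ U := ⟨X ^ N - 1, monic_X_pow_sub_C 1 hN.ne', by simp [hU]⟩
  have hinv : U ^ (N - 1) * U = 1 := by rw [← pow_succ, Nat.sub_add_cancel hN, hU]
  have htail : U ^ (N - 1) * tailMatrix G = headMatrix G := by
    rw [← groverU_mul_headMatrix G hdeg, ← Matrix.mul_assoc, hinv, Matrix.one_mul]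
  have hhead : U ^ (N - 1) * headMatrix G =
      headMatrix G * ((2 : ℂ) • walkMatrix G ℂ) - tailMatrix G :=
    calc U ^ (N - 1) * headMatrix G
        = U ^ (N - 1) * (tailMatrix G * ((2 : ℂ) • walkMatrix G ℂ) - U * tailMatrix G) := by
          rw [groverU_mul_tailMatrix, sub_sub_cancel]
      _ = headMatrix G * ((2 : ℂ) • walkMatrix G ℂ) - tailMatrix G := by
          rw [Matrix.mul_sub, ← Matrix.mul_assoc, ← Matrix.mul_assoc, htail, hinv,
            Matrix.one_mul]
  refine isIntegral_of_intertwining (isIntegral_add_pow hint (N - 1)) (T := headMatrix G) ?_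
    (averageMatrix_mul_headMatrix G hdeg)
  rw [Matrix.add_mul, groverU_mul_headMatrix G hdeg, hhead, add_sub_cancel]

theorem two_smul_walkMatrix_map {K L : Type*} [Field K] [Field L] (f : K →+* L) :
    ((2 : K) • walkMatrix G K).map f = (2 : L) • walkMatrix G L := by
  rw [← walkMatrix_map G f]
  ext x y
  simp only [Matrix.map_apply, Matrix.smul_apply, smul_eq_mul, map_mul, map_ofNat]

theorem charpolyRev_two_smul_transition_mem_lifts (hdeg : ∀ x, 0 < G.degree x)
    (hper : IsPeriodic G) :
    ((2 : ℝ) • transition G).charpolyRev ∈ lifts (Int.castRingHom ℝ) := by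
  have hℚ : IsIntegral ℤ ((2 : ℚ) • walkMatrix G ℚ) := by
    rw [← isIntegral_map_iff (L := ℂ), two_smul_walkMatrix_map]
    exact isIntegral_two_smul_walkMatrix hdeg hper
  obtain ⟨q, hq⟩ := (mem_lifts _).1 (charpoly_mem_lifts_of_isIntegral hℚ)
  rw [← Matrix.reverse_charpoly]
  refine reverse_mem_lifts ((mem_lifts _).2 ⟨q, ?_⟩)
  change _ = ((2 : ℝ) • walkMatrix G ℝ).charpoly
  rw [← two_smul_walkMatrix_map (algebraMap ℚ ℝ), Matrix.charpoly_map, ← hq,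
    Polynomial.map_map]
  congr 1

end GroverWalk

section MatchingPolynomials

variable {W : Type*} {R : Type*} [CommSemiring R]

/-- A matching: a set of pairwise vertex-disjoint edges. -/
def IsMatching (S : Finset (Sym2 V)) : Prop :=
  (S : Set (Sym2 V)).Pairwise fun e f => ∀ x ∈ e, x ∉ f

theorem isMatching_empty : IsMatching (∅ : Finset (Sym2 V)) := by
  rw [IsMatching, Finset.coe_empty]
  exact Set.pairwise_empty _

/-- The weighted matching polynomial of the edge set `A`: the sum, over all matchings contained
in `A`, of the products of the weights of their edges. -/
noncomputable def matchPoly (wt : Sym2 V → R) (A : Finset (Sym2 V)) : R :=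
  ∑ S ∈ A.powerset with IsMatching S, ∏ e ∈ S, wt e

/-- The edges of `A` having no vertex in common with `e`. -/
noncomputable def offEdge (A : Finset (Sym2 V)) (e : Sym2 V) : Finset (Sym2 V) :=
  A.filter fun f => ∀ x ∈ e, x ∉ f

theorem mem_offEdge {A : Finset (Sym2 V)} {e f : Sym2 V} :
    f ∈ offEdge A e ↔ f ∈ A ∧ ∀ x ∈ e, x ∉ f := Finset.mem_filter

theorem offEdge_subset (A : Finset (Sym2 V)) (e : Sym2 V) : offEdge A e ⊆ A :=
  Finset.filter_subset _ _

theorem offEdge_union (A B : Finset (Sym2 V)) (e : Sym2 V) :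
    offEdge (A ∪ B) e = offEdge A e ∪ offEdge B e := Finset.filter_union _ _ _

theorem offEdge_eq_self {A : Finset (Sym2 V)} {e : Sym2 V} (h : ∀ f ∈ A, ∀ x ∈ e, x ∉ f) :
    offEdge A e = A := Finset.filter_true_of_mem h

theorem offEdge_image {r : V → W} (hr : Function.Injective r) (A : Finset (Sym2 V))
    (e : Sym2 V) : offEdge (A.image (Sym2.map r)) (e.map r) = (offEdge A e).image (Sym2.map r) := by
  rw [offEdge, Finset.filter_image, offEdge]
  congr 1
  refine Finset.filter_congr fun f _ => ?_
  simp only [Sym2.mem_map, forall_exists_index, and_imp, forall_apply_eq_imp_iff₂, not_exists,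
    not_and, hr.eq_iff]
  exact forall₂_congr fun x _ => ⟨fun h hx => h x hx rfl, fun h y hy hxy => h (hxy ▸ hy)⟩

theorem isMatching_insert {S : Finset (Sym2 V)} {e : Sym2 V} (he : e ∉ S) :
    IsMatching (insert e S) ↔ IsMatching S ∧ ∀ f ∈ S, ∀ x ∈ e, x ∉ f := by
  have : Std.Symm fun e f : Sym2 V => ∀ x ∈ e, x ∉ f := ⟨fun _ _ h x hx hx' => h x hx' hx⟩
  rw [IsMatching, Finset.coe_insert,
    Set.pairwise_insert_of_symm_of_notMem (mt Finset.mem_coe.1 he)]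
  rfl

theorem matchPoly_empty (wt : Sym2 V → R) : matchPoly wt ∅ = 1 := by
  rw [matchPoly, Finset.powerset_empty, Finset.filter_singleton, if_pos isMatching_empty,
    Finset.sum_singleton, Finset.prod_empty]

theorem matchPoly_insert (wt : Sym2 V → R) {A : Finset (Sym2 V)} {e : Sym2 V} (he : e ∉ A) :
    matchPoly wt (insert e A) = matchPoly wt A + wt e * matchPoly wt (offEdge A e) := by
  have hmatch : {S ∈ A.powerset | IsMatching (insert e S)} =
      {S ∈ (offEdge A e).powerset | IsMatching S} := by
    ext S
    simp only [Finset.mem_filter, Finset.mem_powerset]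
    constructor
    · rintro ⟨hS, hM⟩
      have hM := (isMatching_insert fun h => he (hS h)).1 hM
      exact ⟨fun f hf => mem_offEdge.2 ⟨hS hf, hM.2 f hf⟩, hM.1⟩
    · rintro ⟨hS, hM⟩
      have hSA : S ⊆ A := hS.trans (offEdge_subset A e)
      exact ⟨hSA, (isMatching_insert fun h => he (hSA h)).2
        ⟨hM, fun f hf => (mem_offEdge.1 (hS hf)).2⟩⟩
  rw [matchPoly, Finset.sum_filter, Finset.sum_powerset_insert he, ← Finset.sum_filter,
    ← Finset.sum_filter, hmatch, matchPoly, matchPoly, Finset.mul_sum]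
  congr 1
  refine Finset.sum_congr rfl fun S hS => Finset.prod_insert fun h => he ?_
  exact offEdge_subset A e (Finset.mem_powerset.1 (Finset.mem_filter.1 hS).1 h)

/-- Induction along the recursion `matchPoly_insert`. -/
@[elab_as_elim]
theorem edgeDeletion_induction {P : Finset (Sym2 V) → Prop} (A : Finset (Sym2 V)) (empty : P ∅)
    (insert : ∀ e A, e ∉ A → P A → P (offEdge A e) → P (insert e A)) : P A := by
  induction A using Finset.strongInduction with
  | H A ih =>
    obtain rfl | ⟨e, he⟩ := A.eq_empty_or_nonempty
    · exact empty
    · have hlt := Finset.erase_ssubset he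
      rw [← Finset.insert_erase he]
      exact insert e _ (Finset.notMem_erase e A) (ih _ hlt)
        (ih _ ((offEdge_subset _ e).trans_ssubset hlt))

theorem matchPoly_congr {wt wt' : Sym2 V → R} {A : Finset (Sym2 V)} (h : ∀ e ∈ A, wt e = wt' e) :
    matchPoly wt A = matchPoly wt' A :=
  Finset.sum_congr rfl fun _ hS => Finset.prod_congr rfl fun e he =>
    h e (Finset.mem_powerset.1 (Finset.mem_filter.1 hS).1 he)

theorem map_matchPoly {S : Type*} [CommSemiring S] (f : R →+* S) (wt : Sym2 V → R)
    (A : Finset (Sym2 V)) : f (matchPoly wt A) = matchPoly (fun e => f (wt e)) A := by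
  simp only [matchPoly, map_sum, map_prod]

theorem matchPoly_mem {R' : Type*} [SetLike R' R] [SubsemiringClass R' R] {s : R'}
    {wt : Sym2 V → R} {A : Finset (Sym2 V)} (h : ∀ e ∈ A, wt e ∈ s) : matchPoly wt A ∈ s :=
  sum_mem fun _ hS => prod_mem fun e he =>
    h e (Finset.mem_powerset.1 (Finset.mem_filter.1 hS).1 he)

theorem matchPoly_union (wt : Sym2 V → R) {A B : Finset (Sym2 V)}
    (h : ∀ e ∈ A, ∀ f ∈ B, ∀ x ∈ e, x ∉ f) :
    matchPoly wt (A ∪ B) = matchPoly wt A * matchPoly wt B := by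
  induction A using edgeDeletion_induction with
  | empty => rw [matchPoly_empty, Finset.empty_union, one_mul]
  | insert e A he ihA ihoff =>
    have hA : ∀ f ∈ A, ∀ g ∈ B, ∀ x ∈ f, x ∉ g := fun f hf =>
      h f (Finset.mem_insert_of_mem hf)
    have heB : ∀ f ∈ B, ∀ x ∈ e, x ∉ f := h e (Finset.mem_insert_self e A)
    have he' : e ∉ A ∪ B := fun he' =>
      have heB' := (Finset.mem_union.1 he').resolve_left he
      heB e heB' _ e.out_fst_mem e.out_fst_mem
    rw [Finset.insert_union, matchPoly_insert _ he', matchPoly_insert _ he, offEdge_union,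
      offEdge_eq_self heB, ihA hA, ihoff fun f hf => hA f (offEdge_subset A e hf), add_mul,
      mul_assoc]

theorem matchPoly_image (wt : Sym2 W → R) {r : V → W} (hr : Function.Injective r)
    (A : Finset (Sym2 V)) :
    matchPoly wt (A.image (Sym2.map r)) = matchPoly (fun e => wt (e.map r)) A := by
  induction A using edgeDeletion_induction with
  | empty => rw [Finset.image_empty, matchPoly_empty, matchPoly_empty]
  | insert e A he ihA ihoff =>
    rw [Finset.image_insert, matchPoly_insert, matchPoly_insert _ he, ihA, offEdge_image hr, ihoff]
    rwa [(Sym2.map.injective hr).mem_finset_image]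

theorem matchPoly_union_of_common_vertex (wt : Sym2 V → R) {A B : Finset (Sym2 V)} {u : V}
    (hA : ∀ e ∈ A, u ∈ e) (hB : ∀ e ∈ B, u ∉ e) :
    matchPoly wt (A ∪ B) = matchPoly wt B + ∑ e ∈ A, wt e * matchPoly wt (offEdge B e) := by
  induction A using Finset.induction_on with
  | empty => rw [Finset.empty_union, Finset.sum_empty, add_zero]
  | insert e A he ih =>
    have hue : u ∈ e := hA e (Finset.mem_insert_self e A)
    have huA : ∀ f ∈ A, u ∈ f := fun f hf => hA f (Finset.mem_insert_of_mem hf)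
    have hoff : offEdge A e = ∅ :=
      Finset.filter_eq_empty_iff.2 fun f hf h => h u hue (huA f hf)
    rw [Finset.insert_union, matchPoly_insert, ih huA, offEdge_union, hoff, Finset.empty_union,
      Finset.sum_insert he]
    · ring
    · exact fun h => (Finset.mem_union.1 h).elim he fun heB => hB e heB hue

end MatchingPolynomials

section DeterminantExpansion

open Equiv

variable {R : Type*} [CommRing R] {N : Matrix V V R} {A : Finset (Sym2 V)}

/-- The contribution to `det N` of transposing the two ends of an edge, for `N` with unit
diagonal. -/
def pairWeight (N : Matrix V V R) : Sym2 V → R :=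
  Sym2.lift ⟨fun a b => -(N a b * N b a), fun _ _ => congrArg Neg.neg (mul_comm _ _)⟩

theorem pairWeight_mk (N : Matrix V V R) (a b : V) : pairWeight N s(a, b) = -(N a b * N b a) := rfl

theorem swap_apply_of_mem_offEdge (a b : V) :
    ∀ e ∈ offEdge A s(a, b), ∀ v ∈ e, swap a b v = v := fun _ he _ hv =>
  swap_apply_of_ne_of_ne
    (fun h => (mem_offEdge.1 he).2 a (Sym2.mem_mk_left _ _) (h ▸ hv))
    (fun h => (mem_offEdge.1 he).2 b (Sym2.mem_mk_right _ _) (h ▸ hv))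

variable [Fintype V]

/-- The term of the Leibniz formula for `det N` belonging to `σ`. -/
noncomputable def detTerm (N : Matrix V V R) (σ : Perm V) : R :=
  ((Perm.sign σ : ℤ) : R) * ∏ v, N (σ v) v

theorem det_eq_sum_detTerm (N : Matrix V V R) : N.det = ∑ σ, detTerm N σ := Matrix.det_apply' N

theorem detTerm_one (hN : ∀ v, N v v = 1) : detTerm N 1 = 1 := by simp [detTerm, hN]

theorem detTerm_swap (hN : ∀ v, N v v = 1) {a b : V} (hab : a ≠ b) :
    detTerm N (swap a b) = pairWeight N s(a, b) := by
  rw [detTerm, Perm.sign_swap hab, Fintype.prod_eq_mul a b hab, swap_apply_left,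
    swap_apply_right, pairWeight_mk]
  · push_cast
    ring
  · rintro x ⟨hxa, hxb⟩
    rw [swap_apply_of_ne_of_ne hxa hxb, hN]

theorem detTerm_mul_of_disjoint (hN : ∀ v, N v v = 1) {σ τ : Perm V} (h : σ.Disjoint τ) :
    detTerm N (σ * τ) = detTerm N σ * detTerm N τ := by
  have hprod (v : V) : N ((σ * τ) v) v = N (σ v) v * N (τ v) v := by
    rcases h v with hσ | hτ
    · rw [h.commute.eq, Perm.mul_apply, hσ, hN, one_mul]
    · rw [Perm.mul_apply, hτ, hN, mul_one]
  simp only [detTerm, hprod, Finset.prod_mul_distrib, Perm.sign_mul, Units.val_mul, Int.cast_mul]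
  ring

theorem detTerm_viaEmbedding {α : Type*} [Fintype α] [DecidableEq α] (hN : ∀ v, N v v = 1)
    (r : Perm α) (c : α ↪ V) :
    detTerm N (r.viaEmbedding c) = ((Perm.sign r : ℤ) : R) * ∏ i, N (c (r i)) (c i) := by
  have hsign : Perm.sign (r.viaEmbedding c) = Perm.sign r := by
    rw [Perm.viaEmbedding, Perm.sign_extendDomain]
  rw [detTerm, hsign, ← Finset.prod_subset (Finset.subset_univ (Finset.univ.map c)),
    Finset.prod_map]
  · simp only [Perm.viaEmbedding_apply]
  · intro v _ hv
    rw [r.viaEmbedding_apply_of_notMem c v (by simpa using hv), hN]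

/-- The involutions of the vertex set all of whose transposed pairs lie in `A`. -/
noncomputable def edgeInvolutions (A : Finset (Sym2 V)) : Finset (Perm V) :=
  Finset.univ.filter fun σ => ∀ v, σ (σ v) = v ∧ (σ v = v ∨ s(v, σ v) ∈ A)

theorem mem_edgeInvolutions {σ : Perm V} :
    σ ∈ edgeInvolutions A ↔ ∀ v, σ (σ v) = v ∧ (σ v = v ∨ s(v, σ v) ∈ A) :=
  Finset.mem_filter_univ _

theorem edgeInvolutions_mono {B : Finset (Sym2 V)} (h : A ⊆ B) :
    edgeInvolutions A ⊆ edgeInvolutions B := fun _ hσ =>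
  mem_edgeInvolutions.2 fun v => (mem_edgeInvolutions.1 hσ v).imp_right (Or.imp_right (@h _))

theorem edgeInvolutions_empty : edgeInvolutions (∅ : Finset (Sym2 V)) = {1} := by
  ext σ
  simp only [mem_edgeInvolutions, Finset.notMem_empty, or_false, Finset.mem_singleton]
  exact ⟨fun h => Perm.ext fun v => (h v).2, by rintro rfl; simp⟩

theorem disjoint_of_mem_edgeInvolutions {r σ : Perm V} (hr : ∀ e ∈ A, ∀ v ∈ e, r v = v)
    (hσ : σ ∈ edgeInvolutions A) : r.Disjoint σ := fun v =>
  (mem_edgeInvolutions.1 hσ v).2.symm.imp_left fun h => hr _ h v (Sym2.mem_mk_left _ _)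

theorem sum_detTerm_mulLeft (hN : ∀ v, N v v = 1) {r : Perm V}
    (hr : ∀ e ∈ A, ∀ v ∈ e, r v = v) :
    ∑ σ ∈ (edgeInvolutions A).map (mulLeftEmbedding r), detTerm N σ =
      detTerm N r * ∑ σ ∈ edgeInvolutions A, detTerm N σ := by
  rw [Finset.sum_map, Finset.mul_sum]
  exact Finset.sum_congr rfl fun σ hσ =>
    detTerm_mul_of_disjoint hN (disjoint_of_mem_edgeInvolutions hr hσ)

theorem swap_mul_mem_edgeInvolutions_offEdge {σ : Perm V} {a b : V}
    (hσ : σ ∈ edgeInvolutions (insert s(a, b) A)) (hσa : σ a = b) :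
    swap a b * σ ∈ edgeInvolutions (offEdge A s(a, b)) := by
  rw [mem_edgeInvolutions] at hσ ⊢
  have hσb : σ b = a := hσa ▸ (hσ a).1
  intro v
  simp only [Perm.mul_apply]
  rcases eq_or_ne v a with rfl | hva
  · simp [hσa]
  rcases eq_or_ne v b with rfl | hvb
  · simp [hσb]
  have hσva : σ v ≠ a := fun h => hvb (σ.injective (h.trans hσb.symm))
  have hσvb : σ v ≠ b := fun h => hva (σ.injective (h.trans hσa.symm))
  rw [swap_apply_of_ne_of_ne hσva hσvb, (hσ v).1, swap_apply_of_ne_of_ne hva hvb]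
  refine ⟨rfl, (hσ v).2.imp_right fun h => mem_offEdge.2 ⟨?_, ?_⟩⟩
  · refine Finset.mem_of_mem_insert_of_ne h fun h' => ?_
    have hv : v ∈ s(a, b) := h' ▸ Sym2.mem_mk_left v (σ v)
    exact (Sym2.mem_iff.1 hv).elim hva hvb
  · simp only [Sym2.mem_iff]
    rintro x (rfl | rfl) (h | h)
    exacts [hva h.symm, hσva h.symm, hvb h.symm, hσvb h.symm]

theorem swap_mul_mem_edgeInvolutions_insert {τ : Perm V} {a b : V}
    (hτ : τ ∈ edgeInvolutions (offEdge A s(a, b))) :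
    swap a b * τ ∈ edgeInvolutions (insert s(a, b) A) := by
  have hdisj := disjoint_of_mem_edgeInvolutions (swap_apply_of_mem_offEdge a b) hτ
  rw [mem_edgeInvolutions] at hτ ⊢
  intro v
  refine ⟨?_, ?_⟩
  · rw [← Perm.mul_apply, ← mul_assoc, mul_assoc _ τ, ← hdisj.commute.eq, ← mul_assoc,
      Equiv.swap_mul_self, one_mul, Perm.mul_apply, (hτ v).1]
  · rcases (hτ v).2 with h | h
    · rw [Perm.mul_apply, h]
      rcases eq_or_ne v a with rfl | hva
      · simp
      rcases eq_or_ne v b with rfl | hvb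
      · simp [Sym2.eq_swap]
      · exact .inl (swap_apply_of_ne_of_ne hva hvb)
    · rw [Perm.mul_apply,
        swap_apply_of_mem_offEdge a b _ h (τ v) (Sym2.mem_mk_right _ _)]
      exact .inr (Finset.mem_insert_of_mem (offEdge_subset A _ h))

theorem edgeInvolutions_insert (A : Finset (Sym2 V)) (a b : V) :
    edgeInvolutions (insert s(a, b) A) = edgeInvolutions A ∪
      (edgeInvolutions (offEdge A s(a, b))).map (mulLeftEmbedding (swap a b)) := by
  refine Finset.Subset.antisymm (fun σ hσ => ?_) (Finset.union_subset
    (edgeInvolutions_mono (Finset.subset_insert _ _)) fun σ hσ => ?_)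
  · by_cases hσa : σ a = b
    · refine Finset.mem_union_right _ (Finset.mem_map.2 ⟨swap a b * σ,
        swap_mul_mem_edgeInvolutions_offEdge hσ hσa, ?_⟩)
      rw [mulLeftEmbedding_apply, ← mul_assoc, Equiv.swap_mul_self, one_mul]
    · refine Finset.mem_union_left _ (mem_edgeInvolutions.2 fun v =>
        (mem_edgeInvolutions.1 hσ v).imp_right (Or.imp_right fun h =>
          Finset.mem_of_mem_insert_of_ne h fun h' => hσa ?_))
      rcases Sym2.eq_iff.1 h' with ⟨hva, hvb⟩ | ⟨hvb, hva⟩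
      · exact hva ▸ hvb
      · rw [← hva, (mem_edgeInvolutions.1 hσ v).1, hvb]
  · obtain ⟨τ, hτ, rfl⟩ := Finset.mem_map.1 hσ
    exact swap_mul_mem_edgeInvolutions_insert hτ

theorem disjoint_edgeInvolutions_map_swap {a b : V} (hab : a ≠ b) (he : s(a, b) ∉ A) :
    Disjoint (edgeInvolutions A)
      ((edgeInvolutions (offEdge A s(a, b))).map (mulLeftEmbedding (swap a b))) := by
  rw [Finset.disjoint_right]
  rintro σ hσ hσA
  obtain ⟨τ, hτ, rfl⟩ := Finset.mem_map.1 hσ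
  have hdisj := disjoint_of_mem_edgeInvolutions (swap_apply_of_mem_offEdge a b) hτ
  have hτa : τ a = a := (hdisj a).resolve_left fun h => hab (by simpa using h.symm)
  have ha := (mem_edgeInvolutions.1 hσA a).2
  rw [mulLeftEmbedding_apply, Perm.mul_apply, hτa, swap_apply_left] at ha
  exact ha.elim hab.symm he

theorem sum_detTerm_edgeInvolutions (hN : ∀ v, N v v = 1) (hA : ∀ e ∈ A, ¬e.IsDiag) :
    ∑ σ ∈ edgeInvolutions A, detTerm N σ = matchPoly (pairWeight N) A := by
  induction A using edgeDeletion_induction with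
  | empty => rw [edgeInvolutions_empty, Finset.sum_singleton, detTerm_one hN, matchPoly_empty]
  | insert e A he ihA ihoff =>
    have hA' : ∀ f ∈ A, ¬f.IsDiag := fun f hf => hA f (Finset.mem_insert_of_mem hf)
    induction e with
    | h a b =>
      have hab : a ≠ b := hA _ (Finset.mem_insert_self _ A)
      rw [edgeInvolutions_insert, Finset.sum_union (disjoint_edgeInvolutions_map_swap hab he),
        ihA hA', sum_detTerm_mulLeft hN (swap_apply_of_mem_offEdge a b), detTerm_swap hN hab,
        ihoff fun f hf => hA' f (offEdge_subset A _ hf), matchPoly_insert _ he]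

end DeterminantExpansion

section Unicyclic

open Equiv

theorem exists_walk_edges_eq_map_range {H : SimpleGraph V} (n : ℕ) (x : ℕ → V)
    (hadj : ∀ s < n, H.Adj (x s) (x (s + 1))) :
    ∃ p : H.Walk (x 0) (x n), p.edges = (List.range n).map fun s => s(x s, x (s + 1)) := by
  induction n with
  | zero => exact ⟨SimpleGraph.Walk.nil, rfl⟩
  | succ n ih =>
    obtain ⟨p, hp⟩ := ih fun s hs => hadj s (by omega)
    refine ⟨p.concat (hadj n (by omega)), ?_⟩
    rw [SimpleGraph.Walk.edges_concat, hp, List.range_succ, List.map_append, List.map_singleton,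
      List.concat_eq_append]

theorem ne_of_isAcyclic_of_nonbacktracking {H : SimpleGraph V} (hH : H.IsAcyclic) {n : ℕ}
    (hn : 1 ≤ n) (x : ℕ → V) (hadj : ∀ s < n, H.Adj (x s) (x (s + 1)))
    (hnb : ∀ s, s + 2 ≤ n → x (s + 2) ≠ x s) : x 0 ≠ x n := by
  obtain ⟨p, hp⟩ := exists_walk_edges_eq_map_range n x hadj
  have hpath : p.IsPath := by
    rw [hH.isPath_iff_isChain, hp, List.isChain_map, List.isChain_iff_getElem]
    intro i hi h
    rw [List.length_range] at hi
    rw [List.getElem_range, List.getElem_range, Sym2.eq_iff] at h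
    rcases h with h | h
    · exact (hadj i (by omega)).ne h.1
    · exact hnb i (by omega) h.1.symm
  intro h
  have hlen : p.length = n := by
    rw [← SimpleGraph.Walk.length_edges, hp, List.length_map, List.length_range]
  have := SimpleGraph.Walk.length_eq_zero_iff.2 (hpath.nil_iff_eq.2 h)
  omega

/-- A connected graph with as many edges as vertices, in which `c` runs once around the (then
unique) cycle. -/
structure IsUnicyclic (G : SimpleGraph V) {k : ℕ} (c : ZMod k → V) : Prop where
  three_le : 3 ≤ k
  connected : G.Connected
  injective : Function.Injective c
  adj : ∀ i, G.Adj (c i) (c (i + 1))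
  card_eq : Nat.card V = Nat.card G.edgeSet

/-- A permutation moving every vertex to itself or to a neighbor. Only these contribute to the
determinant of a matrix supported on `G`. -/
def IsAdjPerm (G : SimpleGraph V) (σ : Perm V) : Prop := ∀ v, σ v = v ∨ G.Adj v (σ v)

variable {G : SimpleGraph V} {k : ℕ} {c : ZMod k → V}

namespace IsUnicyclic

theorem neZero (h : IsUnicyclic G c) : NeZero k := ⟨by have := h.three_le; omega⟩

theorem nontrivial (h : IsUnicyclic G c) : Nontrivial V := ⟨c 0, c (0 + 1), (h.adj 0).ne⟩

theorem two_ne_zero (h : IsUnicyclic G c) : (2 : ZMod k) ≠ 0 := by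
  intro h2
  have := Nat.le_of_dvd two_pos ((ZMod.natCast_eq_zero_iff 2 k).1 (mod_cast h2))
  have := h.three_le
  omega

theorem apply_add_one_ne_apply_sub_one (h : IsUnicyclic G c) (i : ZMod k) :
    c (i + 1) ≠ c (i - 1) := fun hc =>
  h.two_ne_zero (by linear_combination h.injective hc)

theorem adj_sub_one (h : IsUnicyclic G c) (i : ZMod k) : G.Adj (c i) (c (i - 1)) := by
  simpa only [sub_add_cancel] using (h.adj (i - 1)).symm

theorem cycle_edge_injective (h : IsUnicyclic G c) :
    Function.Injective fun i => s(c i, c (i + 1)) := by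
  intro i j hij
  rcases Sym2.eq_iff.1 hij with ⟨hij, -⟩ | ⟨hij, hji⟩
  · exact h.injective hij
  · exact absurd (by linear_combination h.injective hji - h.injective hij) h.two_ne_zero

theorem reachable_deleteEdges (h : IsUnicyclic G c) (j : ZMod k) :
    (G.deleteEdges {s(c j, c (j + 1))}).Reachable (c (j + 1)) (c j) := by
  have hreach (n : ℕ) (hn : n < k) :
      (G.deleteEdges {s(c j, c (j + 1))}).Reachable (c (j + 1)) (c (j + 1 + n)) := by
    induction n with
    | zero => rw [Nat.cast_zero, add_zero]
    | succ n ih =>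
      refine (ih (by omega)).trans (SimpleGraph.Adj.reachable ?_)
      rw [SimpleGraph.deleteEdges_adj, Nat.cast_succ, ← add_assoc]
      refine ⟨h.adj _, fun hmem => ?_⟩
      have hj := h.cycle_edge_injective (Set.mem_singleton_iff.1 hmem)
      have hn0 : ((n + 1 : ℕ) : ZMod k) = 0 := by
        push_cast
        linear_combination hj
      have := Nat.le_of_dvd n.succ_pos ((ZMod.natCast_eq_zero_iff _ k).1 hn0)
      omega
  have hk := h.three_le
  convert hreach (k - 1) (by omega) using 2
  rw [Nat.cast_pred (by omega), ZMod.natCast_self, zero_sub, add_neg_cancel_right]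

variable [Finite V]

theorem isAcyclic_deleteEdges (h : IsUnicyclic G c) (j : ZMod k) :
    (G.deleteEdges {s(c j, c (j + 1))}).IsAcyclic := by
  have hbridge : ¬G.IsBridge s(c j, c (j + 1)) := by
    rw [SimpleGraph.isBridge_iff, not_not]
    exact (h.reachable_deleteEdges j).symm
  have hconn := h.connected.connected_delete_edge_of_not_isBridge hbridge
  refine (SimpleGraph.isTree_iff_connected_and_card.2 ⟨hconn, ?_⟩).isAcyclic
  rw [h.card_eq, SimpleGraph.edgeSet_deleteEdges]
  exact Set.ncard_sdiff_singleton_add_one (G.mem_edgeSet.2 (h.adj j))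

theorem exists_cycle_edge_of_closed_walk (h : IsUnicyclic G c) {n : ℕ} (hn : 1 ≤ n)
    {x : ℕ → V} (hadj : ∀ s < n, G.Adj (x s) (x (s + 1)))
    (hnb : ∀ s, s + 2 ≤ n → x (s + 2) ≠ x s) (hclosed : x 0 = x n) (j : ZMod k) :
    ∃ s < n, s(x s, x (s + 1)) = s(c j, c (j + 1)) := by
  by_contra! hne
  refine ne_of_isAcyclic_of_nonbacktracking (h.isAcyclic_deleteEdges j) hn x (fun s hs => ?_) hnb
    hclosed
  rw [SimpleGraph.deleteEdges_adj]
  exact ⟨hadj s hs, hne s hs⟩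

variable {σ : Perm V}

theorem exists_pow_cycle_edge (h : IsUnicyclic G c) (hσ : IsAdjPerm G σ) {v : V}
    (hv : σ (σ v) ≠ v) (j : ZMod k) :
    ∃ n : ℕ, s((σ ^ n) v, (σ ^ (n + 1)) v) = s(c j, c (j + 1)) := by
  have hadj (s : ℕ) : G.Adj ((σ ^ s) v) ((σ ^ (s + 1)) v) := by
    rw [pow_succ', Perm.mul_apply]
    refine (hσ _).resolve_left fun hs => hv ?_
    rw [← Perm.mul_apply, ← pow_succ', pow_succ, Perm.mul_apply] at hs
    rw [(σ ^ s).injective hs, (σ ^ s).injective hs]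
  have hnb (s : ℕ) : (σ ^ (s + 2)) v ≠ (σ ^ s) v := fun hs => by
    rw [pow_add, Perm.mul_apply] at hs
    exact hv ((σ ^ s).injective hs)
  obtain ⟨n, -, hn⟩ := h.exists_cycle_edge_of_closed_walk (orderOf_pos σ)
    (x := fun n => (σ ^ n) v) (fun s _ => hadj s) (fun s _ => hnb s)
    (by simp [pow_orderOf_eq_one]) j
  exact ⟨n, hn⟩

theorem apply_cycle_of_not_involutive (h : IsUnicyclic G c) (hσ : IsAdjPerm G σ)
    {v : V} (hv : σ (σ v) ≠ v) : (∀ i, σ (c i) = c (i + 1)) ∨ ∀ i, σ (c i) = c (i - 1) := by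
  have := h.neZero
  have hstep (j : ZMod k) : σ (c j) = c (j + 1) ∨ σ (c (j + 1)) = c j := by
    obtain ⟨n, hn⟩ := h.exists_pow_cycle_edge hσ hv j
    rw [pow_succ', Perm.mul_apply, Sym2.eq_iff] at hn
    exact hn.imp (fun hn => by rw [← hn.1, hn.2]) (fun hn => by rw [← hn.1, hn.2])
  have hne (i : ZMod k) : c i ≠ c (i + 1 + 1) := fun hi =>
    h.two_ne_zero (by linear_combination -h.injective hi)
  have hforall {P : ZMod k → Prop} (h0 : P 0) (hsucc : ∀ i, P i → P (i + 1)) (i) : P i := by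
    rw [← ZMod.natCast_zmod_val i]
    induction i.val with
    | zero => simpa using h0
    | succ n ih => simpa using hsucc _ ih
  rcases hstep 0 with h0 | h0
  · exact .inl (hforall h0 fun i hi =>
      (hstep _).resolve_right fun hi' => hne i (σ.injective (hi'.trans hi.symm)).symm)
  · have hback := hforall (P := fun i => σ (c (i + 1)) = c i) h0 fun i hi =>
      (hstep _).resolve_left fun hi' => hne i (hi.symm.trans hi')
    exact .inr fun i => by simpa only [sub_add_cancel] using hback (i - 1)

end IsUnicyclic

end Unicyclic

section UnicyclicDeterminant

open Equiv

variable {G : SimpleGraph V} {k : ℕ} {c : ZMod k → V}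

theorem apply_notMem_range {σ : Perm V} {α : Type*} {f : α → V} {s : Perm α}
    (hσ : ∀ i, σ (f i) = f (s i)) {v : V} (hv : v ∉ Set.range f) : σ v ∉ Set.range f := by
  rintro ⟨i, hi⟩
  refine hv ⟨s.symm i, σ.injective ?_⟩
  rw [hσ, s.apply_symm_apply, hi]

namespace IsUnicyclic

/-- The permutation of the vertices that acts on the cycle through the permutation `r` of its
indices and fixes all other vertices. -/
noncomputable def extend (h : IsUnicyclic G c) (r : Perm (ZMod k)) : Perm V :=
  r.viaEmbedding ⟨c, h.injective⟩

theorem extend_apply (h : IsUnicyclic G c) (r : Perm (ZMod k)) (i : ZMod k) :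
    h.extend r (c i) = c (r i) :=
  r.viaEmbedding_apply ⟨c, h.injective⟩ i

theorem extend_apply_of_notMem (h : IsUnicyclic G c) (r : Perm (ZMod k)) {v : V}
    (hv : v ∉ Set.range c) : h.extend r v = v :=
  r.viaEmbedding_apply_of_notMem ⟨c, h.injective⟩ v hv

theorem involutive_off_cycle [Finite V] (h : IsUnicyclic G c) {σ : Perm V} (hσ : IsAdjPerm G σ)
    {r : Perm (ZMod k)} (hσr : ∀ i, σ (c i) = c (r i)) {v : V} (hv : v ∉ Set.range c) :
    σ (σ v) = v := by
  by_contra hne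
  have hpow (n : ℕ) : (σ ^ n) v ∉ Set.range c := by
    induction n with
    | zero => exact hv
    | succ n ih =>
      rw [pow_succ', Perm.mul_apply]
      exact apply_notMem_range hσr ih
  obtain ⟨n, hn⟩ := h.exists_pow_cycle_edge hσ hne 0
  rcases Sym2.eq_iff.1 hn with ⟨hn, -⟩ | ⟨hn, -⟩
  all_goals exact hpow n ⟨_, hn.symm⟩

end IsUnicyclic

variable [Fintype V]

/-- The edges of `G` with no endpoint on the cycle. -/
noncomputable def offCycleEdges (G : SimpleGraph V) (c : ZMod k → V) : Finset (Sym2 V) :=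
  G.edgeFinset.filter fun e => ∀ i, c i ∉ e

theorem mem_offCycleEdges {e : Sym2 V} :
    e ∈ offCycleEdges G c ↔ e ∈ G.edgeSet ∧ ∀ i, c i ∉ e := by
  rw [offCycleEdges, Finset.mem_filter, SimpleGraph.mem_edgeFinset]

theorem mk_mem_offCycleEdges {a b : V} (hab : G.Adj a b) (ha : a ∉ Set.range c)
    (hb : b ∉ Set.range c) : s(a, b) ∈ offCycleEdges G c := by
  refine mem_offCycleEdges.2 ⟨hab, fun i hi => ?_⟩
  rcases Sym2.mem_iff.1 hi with hi | hi
  exacts [ha ⟨i, hi⟩, hb ⟨i, hi⟩]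

variable {σ τ : Perm V} {r : Perm (ZMod k)}

theorem mem_edgeInvolutions_edgeFinset :
    σ ∈ edgeInvolutions G.edgeFinset ↔ IsAdjPerm G σ ∧ ∀ v, σ (σ v) = v := by
  simp only [mem_edgeInvolutions, SimpleGraph.mem_edgeFinset, SimpleGraph.mem_edgeSet, IsAdjPerm,
    forall_and, and_comm]

theorem apply_cycle_of_mem_edgeInvolutions (hτ : τ ∈ edgeInvolutions (offCycleEdges G c))
    (i : ZMod k) : τ (c i) = c i :=
  (mem_edgeInvolutions.1 hτ (c i)).2.resolve_right fun h =>
    (mem_offCycleEdges.1 h).2 i (Sym2.mem_mk_left _ _)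

namespace IsUnicyclic

theorem extend_apply_of_mem_offCycleEdges (h : IsUnicyclic G c) (r : Perm (ZMod k)) :
    ∀ e ∈ offCycleEdges G c, ∀ v ∈ e, h.extend r v = v := by
  refine fun e he v hv => h.extend_apply_of_notMem r ?_
  rintro ⟨i, rfl⟩
  exact (mem_offCycleEdges.1 he).2 i hv

theorem mem_map_edgeInvolutions_offCycleEdges (h : IsUnicyclic G c)
    (hr : ∀ i, G.Adj (c i) (c (r i))) :
    σ ∈ (edgeInvolutions (offCycleEdges G c)).map (mulLeftEmbedding (h.extend r)) ↔
      IsAdjPerm G σ ∧ ∀ i, σ (c i) = c (r i) := by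
  rw [Finset.mem_map]
  constructor
  · rintro ⟨τ, hτ, rfl⟩
    have hcycle (i : ZMod k) : (mulLeftEmbedding (h.extend r) τ) (c i) = c (r i) := by
      rw [mulLeftEmbedding_apply, Perm.mul_apply, apply_cycle_of_mem_edgeInvolutions hτ,
        h.extend_apply]
    refine ⟨fun v => ?_, hcycle⟩
    by_cases hv : v ∈ Set.range c
    · obtain ⟨i, rfl⟩ := hv
      exact .inr (hcycle i ▸ hr i)
    · have hτv := apply_notMem_range (s := 1) (apply_cycle_of_mem_edgeInvolutions hτ) hv
      rw [mulLeftEmbedding_apply, Perm.mul_apply, h.extend_apply_of_notMem r hτv]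
      exact (mem_edgeInvolutions.1 hτ v).2.imp_right fun he => (mem_offCycleEdges.1 he).1
  · rintro ⟨hσ, hσr⟩
    refine ⟨(h.extend r)⁻¹ * σ, mem_edgeInvolutions.2 fun v => ?_, mul_inv_cancel_left _ _⟩
    by_cases hv : v ∈ Set.range c
    · obtain ⟨i, rfl⟩ := hv
      have hi : ((h.extend r)⁻¹ * σ) (c i) = c i := by
        rw [Perm.mul_apply, Perm.inv_eq_iff_eq, hσr, h.extend_apply]
      exact ⟨by rw [hi, hi], .inl hi⟩
    · have hoff {x : V} (hx : x ∉ Set.range c) : ((h.extend r)⁻¹ * σ) x = σ x := by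
        rw [Perm.mul_apply, Perm.inv_eq_iff_eq,
          h.extend_apply_of_notMem r (apply_notMem_range hσr hx)]
      have hσv := apply_notMem_range hσr hv
      rw [hoff hv, hoff hσv]
      exact ⟨h.involutive_off_cycle hσ hσr hv,
        (hσ v).imp_right fun hadj => mk_mem_offCycleEdges hadj hv hσv⟩

theorem filter_isAdjPerm_eq (h : IsUnicyclic G c) :
    Finset.univ.filter (IsAdjPerm G) = edgeInvolutions G.edgeFinset ∪
      ((edgeInvolutions (offCycleEdges G c)).map
          (mulLeftEmbedding (h.extend (Equiv.addRight 1))) ∪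
        (edgeInvolutions (offCycleEdges G c)).map
          (mulLeftEmbedding (h.extend (Equiv.subRight 1)))) := by
  ext σ
  simp only [Finset.mem_filter_univ, Finset.mem_union, mem_edgeInvolutions_edgeFinset,
    h.mem_map_edgeInvolutions_offCycleEdges (r := Equiv.addRight 1) h.adj,
    h.mem_map_edgeInvolutions_offCycleEdges (r := Equiv.subRight 1) h.adj_sub_one,
    ← and_or_left, Equiv.coe_addRight, Equiv.subRight_apply, iff_self_and]
  intro hσ
  by_contra! hne
  obtain ⟨⟨v, hv⟩, ⟨i, hi⟩, ⟨j, hj⟩⟩ := hne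
  exact (h.apply_cycle_of_not_involutive hσ hv).elim (fun h' => hi (h' i)) fun h' => hj (h' j)

theorem disjoint_edgeInvolutions_map_extend (h : IsUnicyclic G c)
    (hr : ∀ i, G.Adj (c i) (c (r i))) (hr2 : r (r 0) ≠ 0) :
    Disjoint (edgeInvolutions G.edgeFinset)
      ((edgeInvolutions (offCycleEdges G c)).map (mulLeftEmbedding (h.extend r))) := by
  rw [Finset.disjoint_left]
  intro σ hinv hσ
  replace hinv := (mem_edgeInvolutions_edgeFinset.1 hinv).2 (c 0)
  replace hσ := ((h.mem_map_edgeInvolutions_offCycleEdges hr).1 hσ).2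
  rw [hσ, hσ] at hinv
  exact hr2 (h.injective hinv)

theorem disjoint_map_extend_map_extend {s : Perm (ZMod k)} (h : IsUnicyclic G c)
    (hr : ∀ i, G.Adj (c i) (c (r i))) (hs : ∀ i, G.Adj (c i) (c (s i))) (hrs : r 0 ≠ s 0) :
    Disjoint ((edgeInvolutions (offCycleEdges G c)).map (mulLeftEmbedding (h.extend r)))
      ((edgeInvolutions (offCycleEdges G c)).map (mulLeftEmbedding (h.extend s))) := by
  rw [Finset.disjoint_left]
  intro σ hσr hσs
  replace hσr := ((h.mem_map_edgeInvolutions_offCycleEdges hr).1 hσr).2 0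
  replace hσs := ((h.mem_map_edgeInvolutions_offCycleEdges hs).1 hσs).2 0
  exact hrs (h.injective (hσr.symm.trans hσs))

variable {R : Type*} [CommRing R] {N : Matrix V V R}

theorem isAdjPerm_of_detTerm_ne_zero (hN : ∀ a b, a ≠ b → ¬G.Adj a b → N a b = 0)
    (h : detTerm N σ ≠ 0) : IsAdjPerm G σ := fun v => by
  by_contra! hv
  refine h (mul_eq_zero_of_right _ (Finset.prod_eq_zero (Finset.mem_univ v) ?_))
  exact hN _ _ hv.1 fun hadj => hv.2 hadj.symm

theorem det_eq (h : IsUnicyclic G c) (hN1 : ∀ v, N v v = 1)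
    (hN : ∀ a b, a ≠ b → ¬G.Adj a b → N a b = 0) :
    N.det = matchPoly (pairWeight N) G.edgeFinset +
      (detTerm N (h.extend (Equiv.addRight 1)) + detTerm N (h.extend (Equiv.subRight 1))) *
        matchPoly (pairWeight N) (offCycleEdges G c) := by
  have hoff := sum_detTerm_edgeInvolutions (A := offCycleEdges G c) hN1 fun e he =>
    G.not_isDiag_of_mem_edgeSet (mem_offCycleEdges.1 he).1
  have hrot (r : Perm (ZMod k)) :=
    hoff ▸ sum_detTerm_mulLeft hN1 (h.extend_apply_of_mem_offCycleEdges r)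
  have hsupport : ∀ σ ∈ Finset.univ, σ ∉ Finset.univ.filter (IsAdjPerm G) → detTerm N σ = 0 :=
    fun σ _ hσ => by_contra fun h0 =>
      hσ (Finset.mem_filter_univ _ |>.2 (isAdjPerm_of_detTerm_ne_zero hN h0))
  have hadd : Equiv.addRight (1 : ZMod k) (Equiv.addRight 1 0) ≠ 0 := by
    simpa [one_add_one_eq_two] using h.two_ne_zero
  have hsub : Equiv.subRight (1 : ZMod k) (Equiv.subRight 1 0) ≠ 0 := by
    simpa [neg_sub_left, one_add_one_eq_two] using h.two_ne_zero
  have hne : Equiv.addRight (1 : ZMod k) 0 ≠ Equiv.subRight 1 0 :=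
    fun h0 => h.apply_add_one_ne_apply_sub_one 0 (congrArg c h0)
  rw [det_eq_sum_detTerm, ← Finset.sum_subset (Finset.subset_univ _) hsupport,
    h.filter_isAdjPerm_eq, Finset.sum_union (Finset.disjoint_union_right.2
      ⟨h.disjoint_edgeInvolutions_map_extend h.adj hadd,
        h.disjoint_edgeInvolutions_map_extend h.adj_sub_one hsub⟩),
    Finset.sum_union (h.disjoint_map_extend_map_extend h.adj h.adj_sub_one hne), hrot, hrot,
    sum_detTerm_edgeInvolutions hN1 fun _ => G.not_isDiag_of_mem_edgeFinset, add_mul]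

end IsUnicyclic

end UnicyclicDeterminant

section CyclePlusTree

open Polynomial Equiv

variable [Fintype V] {G : SimpleGraph V} {k : ℕ} {c : ZMod k → V}

/-- The cycle-plus-tree setting: an odd unicycle graph, with cycle `c`, in which `c 0` has two
neighbors off the cycle and no other cycle vertex has any. -/
structure IsCyclePlusTree (G : SimpleGraph V) {k : ℕ} (c : ZMod k → V) : Prop
    extends IsUnicyclic G c where
  odd : Odd k
  degree_zero : G.degree (c 0) = 4
  degree_eq_two : ∀ i, i ≠ 0 → G.degree (c i) = 2

namespace IsCyclePlusTree

theorem degree_pos (h : IsCyclePlusTree G c) (x : V) : 0 < G.degree x :=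
  have := h.nontrivial
  h.connected.preconnected.degree_pos_of_nontrivial x

theorem neighborFinset_eq (h : IsCyclePlusTree G c) {i : ZMod k} (hi : i ≠ 0) :
    G.neighborFinset (c i) = {c (i + 1), c (i - 1)} := by
  refine (Finset.eq_of_subset_of_card_le (fun x hx => ?_) ?_).symm
  · rw [SimpleGraph.mem_neighborFinset]
    rcases Finset.mem_insert.1 hx with rfl | hx
    · exact h.adj i
    · exact Finset.mem_singleton.1 hx ▸ h.adj_sub_one i
  · rw [SimpleGraph.card_neighborFinset_eq_degree, h.degree_eq_two i hi,
      Finset.card_pair (h.apply_add_one_ne_apply_sub_one i)]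

theorem treeEdges_eq (h : IsCyclePlusTree G c) : treeEdges G c = offCycleEdges G c := by
  refine Finset.filter_congr fun e he => ⟨fun ⟨hcycle, h0⟩ i hi => ?_, fun hoff => ?_⟩
  · rcases eq_or_ne i 0 with rfl | hi0
    · exact h0 hi
    obtain ⟨y, rfl⟩ := Sym2.mem_iff_exists.1 hi
    have hy : y ∈ G.neighborFinset (c i) := (G.mem_neighborFinset _ _).2
      (G.mem_edgeFinset.1 he)
    rw [h.neighborFinset_eq hi0, Finset.mem_insert, Finset.mem_singleton] at hy
    rcases hy with rfl | rfl
    · exact hcycle i rfl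
    · exact hcycle (i - 1) (by rw [sub_add_cancel, Sym2.eq_swap])
  · exact ⟨fun i hi => hoff i (hi ▸ Sym2.mem_mk_left _ _), hoff 0⟩

end IsCyclePlusTree

/-- The matrix `1 - 2 X P`, with `P` the transition matrix, whose determinant is the reversed
characteristic polynomial of `2 P`. -/
noncomputable def revMatrix (G : SimpleGraph V) : Matrix V V ℝ[X] :=
  1 - (X : ℝ[X]) • ((2 : ℝ) • transition G).map C

theorem det_revMatrix : (revMatrix G).det = ((2 : ℝ) • transition G).charpolyRev := rfl

theorem revMatrix_self (v : V) : revMatrix G v v = 1 := by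
  simp [revMatrix, transition]

theorem revMatrix_of_adj {a b : V} (h : G.Adj a b) :
    revMatrix G a b = -(X * C (2 / (G.degree a : ℝ))) := by
  simp [revMatrix, transition, h, h.ne, div_eq_mul_inv]

theorem revMatrix_of_not_adj {a b : V} (hab : a ≠ b) (h : ¬G.Adj a b) : revMatrix G a b = 0 := by
  simp [revMatrix, transition, h, hab]

theorem pairWeight_revMatrix {e : Sym2 V} (he : e ∈ G.edgeSet) :
    pairWeight (revMatrix G) e = -(X ^ 2 * C (4 * edgeM G e)) := by
  induction e with
  | h a b =>
    have hM : 4 * edgeM G s(a, b) = (2 / (G.degree a : ℝ)) * (2 / (G.degree b : ℝ)) := by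
      simp only [edgeM, Sym2.lift_mk]
      ring
    rw [SimpleGraph.mem_edgeSet] at he
    rw [pairWeight_mk, revMatrix_of_adj he, revMatrix_of_adj he.symm, hM, C_mul]
    ring

/-- The generating polynomial `∑ i, 4 ^ i * matchSum G A i * X ^ i`. -/
noncomputable def matchGen (G : SimpleGraph V) (A : Finset (Sym2 V)) : ℝ[X] :=
  matchPoly (fun e => X * C (4 * edgeM G e)) A

theorem coeff_matchGen (A : Finset (Sym2 V)) (n : ℕ) :
    (matchGen G A).coeff n = 4 ^ n * matchSum G A n := by
  have hterm (S : Finset (Sym2 V)) : (∏ e ∈ S, (X * C (4 * edgeM G e) : ℝ[X])).coeff n =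
      if S.card = n then 4 ^ n * ∏ e ∈ S, edgeM G e else 0 := by
    rw [Finset.prod_mul_distrib, Finset.prod_const, ← map_prod, mul_comm, coeff_C_mul_X_pow,
      Finset.prod_mul_distrib, Finset.prod_const]
    split_ifs <;> simp_all
  rw [matchGen, matchPoly, finsetSum_coeff, Finset.sum_congr rfl fun S _ => hterm S,
    ← Finset.sum_filter, matchSum, Finset.mul_sum, Finset.filter_filter]
  refine Finset.sum_congr (Finset.filter_congr fun S _ => ?_) fun _ _ => rfl
  rw [and_comm]
  simp only [IsMatching, Set.Pairwise, Finset.mem_coe, not_and]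

theorem matchSum_zero (A : Finset (Sym2 V)) : matchSum G A 0 = 1 := by
  rw [matchSum, Finset.sum_eq_single ∅]
  · simp
  · exact fun S hS hne => absurd (Finset.card_eq_zero.1 (Finset.mem_filter.1 hS).2.1) hne
  · exact fun h => absurd (by simp) h

theorem matchPoly_pairWeight_revMatrix {A : Finset (Sym2 V)} (hA : ∀ e ∈ A, e ∈ G.edgeSet) :
    matchPoly (pairWeight (revMatrix G)) A = expand ℝ 2 ((matchGen G A).comp (-X)) := by
  rw [matchGen, ← coe_compRingHom_apply, map_matchPoly, ← AlgHom.coe_toRingHom, map_matchPoly]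
  refine matchPoly_congr fun e he => (pairWeight_revMatrix (hA e he)).trans ?_
  simp

namespace IsCyclePlusTree

theorem prod_cycle_weight [NeZero k] (h : IsCyclePlusTree G c) :
    ∏ i, (-(X * C (2 / (G.degree (c i) : ℝ))) : ℝ[X]) = -(X ^ k * C (1 / 2)) := by
  have h2 (i : ZMod k) (hi : i ∈ Finset.univ.erase 0) :
      (-(X * C (2 / (G.degree (c i) : ℝ))) : ℝ[X]) = -X := by
    rw [h.degree_eq_two i (Finset.ne_of_mem_erase hi), Nat.cast_two, div_self two_ne_zero, C_1,
      mul_one]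
  obtain ⟨m, rfl⟩ := h.odd
  rw [← Finset.mul_prod_erase _ _ (Finset.mem_univ 0), Finset.prod_congr rfl h2,
    Finset.prod_const, Finset.card_erase_of_mem (Finset.mem_univ _), Finset.card_univ, ZMod.card,
    h.degree_zero, Nat.add_sub_cancel, (even_two_mul m).neg_pow]
  norm_num
  ring

theorem detTerm_extend (h : IsCyclePlusTree G c) {r : Perm (ZMod k)}
    (hr : ∀ i, G.Adj (c i) (c (r i))) (hrk : r ^ k = 1) :
    detTerm (revMatrix G) (h.extend r) = -(X ^ k * C (1 / 2)) := by
  have := h.neZero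
  have hsign : Perm.sign r = 1 := by
    have hk := Int.units_pow_eq_pow_mod_two (Perm.sign r) k
    rwa [← map_pow, hrk, map_one, Nat.odd_iff.1 h.odd, pow_one, eq_comm] at hk
  rw [IsUnicyclic.extend, detTerm_viaEmbedding revMatrix_self, hsign, Units.val_one, Int.cast_one,
    one_mul, ← h.prod_cycle_weight,
    ← Equiv.prod_comp r fun i => -(X * C (2 / (G.degree (c i) : ℝ)))]
  exact Finset.prod_congr rfl fun i _ => revMatrix_of_adj (hr i).symm

theorem charpolyRev_eq (h : IsCyclePlusTree G c) :
    ((2 : ℝ) • transition G).charpolyRev = expand ℝ 2 ((matchGen G G.edgeFinset).comp (-X)) -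
      X ^ k * expand ℝ 2 ((matchGen G (treeEdges G c)).comp (-X)) := by
  have hadd : Equiv.addRight (1 : ZMod k) ^ k = 1 := by
    ext i
    simp
  have hsub : Equiv.subRight (1 : ZMod k) ^ k = 1 := by
    ext i
    simp [Equiv.subRight_eq_addRight_neg]
  have hhalf : (C (1 / 2) : ℝ[X]) + C (1 / 2) = 1 := by
    rw [← C_add, add_halves, C_1]
  rw [← det_revMatrix, h.det_eq revMatrix_self fun _ _ => revMatrix_of_not_adj,
    h.detTerm_extend h.adj hadd, h.detTerm_extend h.adj_sub_one hsub, h.treeEdges_eq,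
    matchPoly_pairWeight_revMatrix fun e => G.mem_edgeFinset.1,
    matchPoly_pairWeight_revMatrix fun e he => (mem_offCycleEdges.1 he).1]
  linear_combination (-(X ^ k * expand ℝ 2 ((matchGen G (offCycleEdges G c)).comp (-X)))) * hhalf

theorem matchGen_mem_lifts (h : IsCyclePlusTree G c) (hper : IsPeriodic G) :
    matchGen G G.edgeFinset ∈ lifts (Int.castRingHom ℝ) ∧
      matchGen G (treeEdges G c) ∈ lifts (Int.castRingHom ℝ) := by
  have hint := charpolyRev_two_smul_transition_mem_lifts h.degree_pos hper
  rw [h.charpolyRev_eq] at hint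
  exact (mem_lifts_of_expand_two_sub h.odd hint).imp mem_lifts_of_comp_neg_X_mem
    mem_lifts_of_comp_neg_X_mem

end IsCyclePlusTree

end CyclePlusTree

section Threads

open Polynomial

variable [Fintype V] {G : SimpleGraph V} {k : ℕ} {c : ZMod k → V} {v w : ℕ → V} {r s t : ℕ}

theorem edgeWeight_eq_X {a b : V} (ha : G.degree a = 2) (hb : G.degree b = 2) :
    (X * C (4 * edgeM G s(a, b)) : ℝ[X]) = X := by
  have : 4 * edgeM G s(a, b) = 1 := by
    simp only [edgeM, Sym2.lift_mk, ha, hb]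
    norm_num
  rw [this, C_1, mul_one]

theorem eq_of_adj_of_degree_eq_two {a b x y : V} (hdeg : G.degree a = 2) (hx : G.Adj a x)
    (hy : G.Adj a y) (hxy : x ≠ y) (hb : G.Adj a b) : b = x ∨ b = y := by
  have hsub : ({x, y} : Finset V) ⊆ G.neighborFinset a := by
    simp [Finset.insert_subset_iff, hx, hy]
  have heq := Finset.eq_of_subset_of_card_le hsub
    (by rw [SimpleGraph.card_neighborFinset_eq_degree, hdeg, Finset.card_pair hxy])
  rwa [← SimpleGraph.mem_neighborFinset, ← heq, Finset.mem_insert, Finset.mem_singleton] at hb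

/-- The first `t` steps of `v` form a nonbacktracking walk that leaves the cycle at `c 0`, and
the vertices `v 1, …, v t` have degree two. -/
structure IsThread (G : SimpleGraph V) (c : ZMod k → V) (v : ℕ → V) (t : ℕ) : Prop where
  start : v 0 = c 0
  adj : ∀ s < t, G.Adj (v s) (v (s + 1))
  one_notMem : v 1 ∉ Set.range c
  nonbacktracking : ∀ s, s + 2 ≤ t → v (s + 2) ≠ v s
  degree : ∀ s, 1 ≤ s → s ≤ t → G.degree (v s) = 2

/-- The edges of the tree part other than the thread edges `g_2, …, g_r`, where `g_j` joins
`v (j - 1)` to `v j`. -/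
noncomputable def prunedEdges (G : SimpleGraph V) (c : ZMod k → V) (v : ℕ → V) (r : ℕ) :
    Finset (Sym2 V) :=
  treeEdges G c \ (Finset.Icc 2 r).image fun j => s(v (j - 1), v j)

theorem mem_prunedEdges {e : Sym2 V} : e ∈ prunedEdges G c v r ↔
    e ∈ treeEdges G c ∧ ∀ j, 1 ≤ j → j < r → e ≠ s(v j, v (j + 1)) := by
  rw [prunedEdges, Finset.mem_sdiff, Finset.mem_image]
  refine and_congr_right fun _ => ⟨fun h j hj hjr he => h ⟨j + 1, ?_, he.symm⟩, ?_⟩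
  · exact Finset.mem_Icc.2 ⟨by omega, hjr⟩
  · rintro h ⟨j, hj, rfl⟩
    rw [Finset.mem_Icc] at hj
    obtain ⟨i, rfl⟩ := Nat.exists_eq_add_of_le' hj.1
    exact h (i + 1) (by omega) (by omega) rfl

theorem prunedEdges_eq_treeEdges (hr : r ≤ 1) : prunedEdges G c v r = treeEdges G c := by
  rw [prunedEdges, Finset.Icc_eq_empty (by omega), Finset.image_empty, Finset.sdiff_empty]

namespace IsThread

theorem eq_of_mem (h : IsThread G c v t) (hst : s + 2 ≤ t) {e : Sym2 V}
    (he : e ∈ G.edgeSet) (hmem : v (s + 1) ∈ e) :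
    e = s(v s, v (s + 1)) ∨ e = s(v (s + 1), v (s + 2)) := by
  obtain ⟨y, rfl⟩ := Sym2.mem_iff_exists.1 hmem
  rcases eq_of_adj_of_degree_eq_two (h.degree (s + 1) (by omega) (by omega))
    (h.adj s (by omega)).symm (h.adj (s + 1) (by omega)) (h.nonbacktracking s hst).symm he
    with rfl | rfl
  · exact .inl Sym2.eq_swap
  · exact .inr rfl

theorem notMem_range (h : IsThread G c v t) (hG : IsCyclePlusTree G c) (hs1 : 1 ≤ s)
    (hst : s ≤ t) : v s ∉ Set.range c := by
  induction s using Nat.strong_induction_on with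
  | _ s ih =>
    obtain rfl | hs := hs1.eq_or_lt
    · exact h.one_notMem
    rintro ⟨i, hi⟩
    rcases eq_or_ne i 0 with rfl | hi0
    · obtain ⟨j, hj, hcyc⟩ := hG.exists_cycle_edge_of_closed_walk hs1
        (fun j hj => h.adj j (by omega)) (fun j hj => h.nonbacktracking j (by omega))
        (h.start.trans hi) 0
      have hmem : v j ∈ Set.range c ∧ v (j + 1) ∈ Set.range c := by
        rcases Sym2.eq_iff.1 hcyc with ⟨h1, h2⟩ | ⟨h1, h2⟩ <;> exact ⟨⟨_, h1.symm⟩, ⟨_, h2.symm⟩⟩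
      rcases j.eq_zero_or_pos with rfl | hj0
      · exact h.one_notMem hmem.2
      · exact ih j hj hj0 (by omega) hmem.1
    · obtain ⟨s, rfl⟩ := Nat.exists_eq_add_of_le' hs1
      have hmem : v s ∈ G.neighborFinset (c i) :=
        (G.mem_neighborFinset _ _).2 (hi ▸ (h.adj s hst).symm)
      rw [hG.neighborFinset_eq hi0, Finset.mem_insert, Finset.mem_singleton] at hmem
      refine ih s (by omega) (by omega) (by omega) ?_
      rcases hmem with hmem | hmem <;> exact ⟨_, hmem.symm⟩

theorem injOn (h : IsThread G c v t) (hG : IsCyclePlusTree G c) : Set.InjOn v (Set.Iic t) := by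
  have hne {a b : ℕ} (hab : a < b) (hb : b ≤ t) : v a ≠ v b := fun heq => by
    obtain ⟨j, hj, hcyc⟩ := hG.exists_cycle_edge_of_closed_walk (x := fun j => v (a + j))
      (n := b - a) (by omega) (fun j hj => h.adj (a + j) (by omega))
      (fun j hj => h.nonbacktracking (a + j) (by omega)) (by simp [hab.le, heq]) 0
    refine h.notMem_range hG (s := a + (j + 1)) (by omega) (by omega) ?_
    rcases Sym2.eq_iff.1 hcyc with hcyc | hcyc <;> exact ⟨_, hcyc.2.symm⟩
  intro a ha b hb hab
  rcases lt_trichotomy a b with hlt | heq | hlt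
  exacts [absurd hab (hne hlt hb), heq, absurd hab.symm (hne hlt ha)]

theorem edge_injOn (h : IsThread G c v t) (hG : IsCyclePlusTree G c) :
    Set.InjOn (fun s => s(v s, v (s + 1))) (Set.Iio t) := by
  intro a ha b hb hab
  rw [Set.mem_Iio] at ha hb
  have hinj {a b : ℕ} (ha : a ≤ t) (hb : b ≤ t) (hab : v a = v b) : a = b :=
    h.injOn hG ha hb hab
  rcases Sym2.eq_iff.1 hab with ⟨h1, -⟩ | ⟨h1, h2⟩
  · exact hinj ha.le hb.le h1
  · have := hinj ha.le hb h1
    have := hinj ha hb.le h2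
    omega

theorem ne_of_mem_prunedEdges (h : IsThread G c v t) {e : Sym2 V}
    (he : e ∈ prunedEdges G c v r) (hs : s < r) : e ≠ s(v s, v (s + 1)) := by
  rw [mem_prunedEdges] at he
  rcases s.eq_zero_or_pos with rfl | hs0
  · rintro rfl
    exact (Finset.mem_filter.1 he.1).2.2 (h.start ▸ Sym2.mem_mk_left _ _)
  · exact he.2 s hs0 hs

theorem insert_prunedEdges (h : IsThread G c v t) (hG : IsCyclePlusTree G c)
    (hr : r + 2 ≤ t) :
    prunedEdges G c v (r + 1) = insert s(v (r + 1), v (r + 2)) (prunedEdges G c v (r + 2)) := by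
  ext e
  rw [Finset.mem_insert]
  constructor
  · rw [mem_prunedEdges, mem_prunedEdges]
    rintro ⟨he, hne⟩
    refine or_iff_not_imp_left.2 fun her => ⟨he, fun j hj hjr => ?_⟩
    rcases (Nat.lt_succ_iff.1 hjr).eq_or_lt with rfl | hlt
    exacts [her, hne j hj hlt]
  · rintro (rfl | he)
    · refine mem_prunedEdges.2 ⟨?_, fun j _ hj heq => ?_⟩
      · rw [hG.treeEdges_eq]
        exact mk_mem_offCycleEdges (h.adj _ (by omega)) (h.notMem_range hG (by omega) (by omega))
          (h.notMem_range hG (by omega) hr)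
      · exact hj.ne' (h.edge_injOn hG (Set.mem_Iio.2 (by omega)) (Set.mem_Iio.2 (by omega)) heq)
    · rw [mem_prunedEdges] at he ⊢
      exact ⟨he.1, fun j hj hjr => he.2 j hj (by omega)⟩

theorem offEdge_prunedEdges (h : IsThread G c v t) (hr : r + 2 ≤ t) :
    offEdge (prunedEdges G c v (r + 1)) s(v r, v (r + 1)) = prunedEdges G c v (r + 2) := by
  ext e
  rw [mem_offEdge]
  constructor
  · rintro ⟨he, hoff⟩
    refine mem_prunedEdges.2 ⟨(mem_prunedEdges.1 he).1, fun j hj hjr => ?_⟩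
    rcases (Nat.lt_succ_iff.1 hjr).eq_or_lt with rfl | hlt
    · rintro rfl
      exact hoff _ (Sym2.mem_mk_right _ _) (Sym2.mem_mk_left _ _)
    · exact (mem_prunedEdges.1 he).2 j hj hlt
  · intro he
    have hne {j : ℕ} (hj : j < r + 2) : e ≠ s(v j, v (j + 1)) := h.ne_of_mem_prunedEdges he hj
    rw [mem_prunedEdges] at he
    obtain ⟨hedge, -, h0⟩ := Finset.mem_filter.1 he.1
    rw [SimpleGraph.mem_edgeFinset] at hedge
    refine ⟨mem_prunedEdges.2 ⟨he.1, fun j hj hjr => he.2 j hj (by omega)⟩, fun x hx hxe => ?_⟩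
    rcases Sym2.mem_iff.1 hx with rfl | rfl
    · cases r with
      | zero => exact h0 (h.start ▸ hxe)
      | succ r => rcases h.eq_of_mem (by omega) hedge hxe with he | he <;> exact hne (by omega) he
    · rcases h.eq_of_mem hr hedge hxe with he | he <;> exact hne (by omega) he

theorem matchGen_prunedEdges (h : IsThread G c v t) (hG : IsCyclePlusTree G c)
    (hr : r + 3 ≤ t) : matchGen G (prunedEdges G c v (r + 1)) =
      matchGen G (prunedEdges G c v (r + 2)) + X * matchGen G (prunedEdges G c v (r + 3)) := by
  have hnotMem : s(v (r + 1), v (r + 2)) ∉ prunedEdges G c v (r + 2) := fun hmem =>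
    h.ne_of_mem_prunedEdges hmem (by omega) rfl
  rw [h.insert_prunedEdges hG (by omega), matchGen, matchPoly_insert _ hnotMem,
    h.offEdge_prunedEdges hr,
    edgeWeight_eq_X (h.degree _ (by omega) (by omega)) (h.degree _ (by omega) (by omega))]
  rfl

end IsThread

/-- The generating polynomial `∑ n, 2 ^ (2 * n - 1) * Lm G c v w n r * X ^ n`. -/
noncomputable def prunedGen (G : SimpleGraph V) (c : ZMod k → V) (v w : ℕ → V) (r : ℕ) : ℝ[X] :=
  C (1 / 2) * (matchGen G (prunedEdges G c v r) + matchGen G (prunedEdges G c w r))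

theorem coeff_prunedGen (n : ℕ) :
    (prunedGen G c v w r).coeff n = 2 ^ (2 * (n : ℤ) - 1) * Lm G c v w n r := by
  have hpow : (2 : ℝ) ^ (2 * (n : ℤ) - 1) = 1 / 2 * 4 ^ n := by
    rw [zpow_sub_one₀ two_ne_zero, _root_.zpow_mul, zpow_natCast]
    norm_num
    ring
  rw [prunedGen, coeff_C_mul, coeff_add, coeff_matchGen, coeff_matchGen, ← mul_add, hpow, mul_assoc]
  rfl

theorem prunedGen_eq_matchGen_treeEdges (hr : r ≤ 1) :
    prunedGen G c v w r = matchGen G (treeEdges G c) := by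
  rw [prunedGen, prunedEdges_eq_treeEdges hr, prunedEdges_eq_treeEdges hr, mul_add, ← add_mul,
    ← C_add, add_halves, C_1, one_mul]

theorem prunedGen_add_one (hG : IsCyclePlusTree G c) (hv : IsThread G c v t)
    (hw : IsThread G c w t) (hr : r + 3 ≤ t) : prunedGen G c v w (r + 1) =
      prunedGen G c v w (r + 2) + X * prunedGen G c v w (r + 3) := by
  rw [prunedGen, hv.matchGen_prunedEdges hG hr, hw.matchGen_prunedEdges hG hr, prunedGen,
    prunedGen]
  ring

end Threads

section VertexExpansion

open Polynomial

theorem matchPoly_edgeFinset [Fintype V] (G : SimpleGraph V) {R : Type*} [CommSemiring R]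
    (wt : Sym2 V → R) (u : V) :
    matchPoly wt G.edgeFinset = matchPoly wt {e ∈ G.edgeFinset | u ∉ e} +
      ∑ y ∈ G.neighborFinset u, wt s(u, y) *
        matchPoly wt (offEdge {e ∈ G.edgeFinset | u ∉ e} s(u, y)) := by
  have hstar : {e ∈ G.edgeFinset | u ∈ e} = (G.neighborFinset u).image fun y => s(u, y) := by
    ext e
    simp only [Finset.mem_filter, Finset.mem_image, SimpleGraph.mem_edgeFinset,
      SimpleGraph.mem_neighborFinset]
    refine ⟨fun ⟨he, hu⟩ => ?_, ?_⟩
    · obtain ⟨y, rfl⟩ := Sym2.mem_iff_exists.1 hu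
      exact ⟨y, he, rfl⟩
    · rintro ⟨y, hy, rfl⟩
      exact ⟨hy, Sym2.mem_mk_left _ _⟩
  rw [← Finset.sum_image (f := fun e => wt e * matchPoly wt (offEdge _ e)) (g := fun y => s(u, y))
    fun _ _ _ _ h => Sym2.congr_right.1 h, ← hstar, ← matchPoly_union_of_common_vertex wt
    (fun e he => (Finset.mem_filter.1 he).2) fun e he => (Finset.mem_filter.1 he).2,
    Finset.filter_union_filter_not_eq]

variable [Fintype V] {G : SimpleGraph V} {k : ℕ} {c : ZMod k → V} {v w : ℕ → V} {r t : ℕ}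

/-- The edges of the cycle that do not contain the vertex `c 0`. -/
noncomputable def innerEdges (G : SimpleGraph V) (c : ZMod k → V) : Finset (Sym2 V) :=
  G.edgeFinset.filter fun e => c 0 ∉ e ∧ ∃ i, e = s(c i, c (i + 1))

theorem notMem_of_mem_innerEdges {e : Sym2 V} (he : e ∈ innerEdges G c) : c 0 ∉ e :=
  (Finset.mem_filter.1 he).2.1

theorem mem_range_of_mem_innerEdges {e : Sym2 V} (he : e ∈ innerEdges G c) {x : V} (hx : x ∈ e) :
    x ∈ Set.range c := by
  obtain ⟨-, -, i, rfl⟩ := Finset.mem_filter.1 he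
  rcases Sym2.mem_iff.1 hx with rfl | rfl <;> exact Set.mem_range_self _

theorem innerEdges_union_treeEdges :
    innerEdges G c ∪ treeEdges G c = {e ∈ G.edgeFinset | c 0 ∉ e} := by
  ext e
  simp only [innerEdges, treeEdges, Finset.mem_union, Finset.mem_filter, ← not_exists]
  tauto

theorem offEdge_innerEdges {y : V} (hy : y ∉ Set.range c) :
    offEdge (innerEdges G c) s(c 0, y) = innerEdges G c := by
  refine offEdge_eq_self fun e he x hx hxe => ?_
  rcases Sym2.mem_iff.1 hx with rfl | rfl
  exacts [notMem_of_mem_innerEdges he hxe, hy (mem_range_of_mem_innerEdges he hxe)]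

theorem IsUnicyclic.image_innerEdges (h : IsUnicyclic G c) :
    (innerEdges G c).image (Sym2.map (h.extend (Equiv.neg _))) = innerEdges G c := by
  refine Finset.eq_of_subset_of_card_le (Finset.image_subset_iff.2 fun e he => ?_)
    (Finset.card_image_of_injective _ (Sym2.map.injective (Equiv.injective _))).ge
  have h0 := notMem_of_mem_innerEdges he
  obtain ⟨-, -, i, rfl⟩ := Finset.mem_filter.1 he
  have hmap : Sym2.map (h.extend (Equiv.neg _)) s(c i, c (i + 1)) =
      s(c (-i - 1), c (-i - 1 + 1)) := by
    rw [Sym2.map_mk, h.extend_apply, h.extend_apply, Equiv.neg_apply, neg_add',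
      sub_add_cancel, Sym2.eq_swap]
  rw [innerEdges, Finset.mem_filter, SimpleGraph.mem_edgeFinset, hmap]
  refine ⟨h.adj _, ?_, _, rfl⟩
  simp only [Sym2.mem_iff, h.injective.eq_iff, not_or] at h0 ⊢
  exact ⟨fun h1 => h0.2 (by linear_combination -h1), fun h1 => h0.1 (by linear_combination -h1)⟩

namespace IsCyclePlusTree

theorem notMem_of_mem_treeEdges (h : IsCyclePlusTree G c) {e : Sym2 V} (he : e ∈ treeEdges G c)
    (i : ZMod k) : c i ∉ e :=
  (mem_offCycleEdges.1 (h.treeEdges_eq ▸ he)).2 i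

theorem offEdge_treeEdges (h : IsCyclePlusTree G c) (i j : ZMod k) :
    offEdge (treeEdges G c) s(c i, c j) = treeEdges G c := by
  refine offEdge_eq_self fun e he x hx => ?_
  rcases Sym2.mem_iff.1 hx with rfl | rfl <;> exact h.notMem_of_mem_treeEdges he _

theorem matchGen_union (h : IsCyclePlusTree G c) {A B : Finset (Sym2 V)}
    (hA : A ⊆ innerEdges G c) (hB : B ⊆ treeEdges G c) :
    matchGen G (A ∪ B) = matchGen G A * matchGen G B := by
  refine matchPoly_union _ fun e he f hf x hx => ?_
  obtain ⟨i, rfl⟩ := mem_range_of_mem_innerEdges (hA he) hx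
  exact h.notMem_of_mem_treeEdges (hB hf) i

theorem matchGen_of_subset_innerEdges (h : IsCyclePlusTree G c) {A : Finset (Sym2 V)}
    (hA : A ⊆ innerEdges G c) : matchGen G A = matchPoly (fun _ => X) A := by
  refine matchPoly_congr fun e he => ?_
  have h0 := notMem_of_mem_innerEdges (hA he)
  obtain ⟨-, -, i, rfl⟩ := Finset.mem_filter.1 (hA he)
  rw [Sym2.mem_iff, not_or] at h0
  exact edgeWeight_eq_X (h.degree_eq_two i fun hi => h0.1 (hi ▸ rfl))
    (h.degree_eq_two (i + 1) fun hi => h0.2 (hi ▸ rfl))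

theorem matchGen_mem_lifts_of_subset_innerEdges (h : IsCyclePlusTree G c) {A : Finset (Sym2 V)}
    (hA : A ⊆ innerEdges G c) : matchGen G A ∈ lifts (Int.castRingHom ℝ) := by
  rw [h.matchGen_of_subset_innerEdges hA]
  exact matchPoly_mem fun _ _ => X_mem_lifts _

theorem matchGen_offEdge_innerEdges_neg_one (h : IsCyclePlusTree G c) :
    matchGen G (offEdge (innerEdges G c) s(c 0, c (-1))) =
      matchGen G (offEdge (innerEdges G c) s(c 0, c 1)) := by
  have hmap : s(c 0, c (-1)) = Sym2.map (h.extend (Equiv.neg _)) s(c 0, c 1) := by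
    rw [Sym2.map_mk, h.extend_apply, h.extend_apply, Equiv.neg_apply, neg_zero]
  rw [h.matchGen_of_subset_innerEdges (offEdge_subset _ _),
    h.matchGen_of_subset_innerEdges (offEdge_subset _ _), hmap]
  nth_rewrite 1 [← h.image_innerEdges]
  rw [offEdge_image (Equiv.injective _), matchPoly_image _ (Equiv.injective _)]

theorem sum_neighborFinset_zero (h : IsCyclePlusTree G c) {x y : V} (hx : x ∉ Set.range c)
    (hy : y ∉ Set.range c) (hxy : x ≠ y) (hux : G.Adj (c 0) x) (huy : G.Adj (c 0) y)
    {M : Type*} [AddCommMonoid M] (f : V → M) :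
    ∑ z ∈ G.neighborFinset (c 0), f z = f (c 1) + (f (c (-1)) + (f x + f y)) := by
  have hnotMem₁ : c 1 ∉ ({c (-1), x, y} : Finset V) := by
    have hne := h.apply_add_one_ne_apply_sub_one 0
    rw [zero_add, zero_sub] at hne
    simp only [Finset.mem_insert, Finset.mem_singleton, not_or]
    exact ⟨hne, fun h1 => hx ⟨1, h1⟩, fun h1 => hy ⟨1, h1⟩⟩
  have hnotMem₂ : c (-1) ∉ ({x, y} : Finset V) := by
    simp only [Finset.mem_insert, Finset.mem_singleton, not_or]
    exact ⟨fun h1 => hx ⟨-1, h1⟩, fun h1 => hy ⟨-1, h1⟩⟩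
  have hsub : {c 1, c (-1), x, y} ⊆ G.neighborFinset (c 0) := by
    have h1 := h.adj 0
    have h2 := h.adj_sub_one 0
    rw [zero_add] at h1
    rw [zero_sub] at h2
    simp [Finset.insert_subset_iff, h1, h2, hux, huy]
  rw [← Finset.eq_of_subset_of_card_le hsub, Finset.sum_insert hnotMem₁,
    Finset.sum_insert hnotMem₂, Finset.sum_pair hxy]
  rw [SimpleGraph.card_neighborFinset_eq_degree, h.degree_zero,
    Finset.card_insert_of_notMem hnotMem₁, Finset.card_insert_of_notMem hnotMem₂,
    Finset.card_pair hxy]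

theorem edgeWeight_zero (h : IsCyclePlusTree G c) {x : V} (hx : G.degree x = 2) :
    (X * C (4 * edgeM G s(c 0, x)) : ℝ[X]) = X * C (1 / 2) := by
  have : 4 * edgeM G s(c 0, x) = 1 / 2 := by
    simp only [edgeM, Sym2.lift_mk, h.degree_zero, hx]
    norm_num
  rw [this]

theorem matchGen_offEdge_thread (h : IsCyclePlusTree G c) (hv : IsThread G c v t) (ht : 2 ≤ t) :
    matchGen G (offEdge (innerEdges G c ∪ treeEdges G c) s(c 0, v 1)) =
      matchGen G (innerEdges G c) * matchGen G (prunedEdges G c v 2) := by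
  have hoff : offEdge (prunedEdges G c v 1) s(v 0, v 1) = prunedEdges G c v 2 :=
    hv.offEdge_prunedEdges ht
  rw [prunedEdges_eq_treeEdges le_rfl, hv.start] at hoff
  rw [offEdge_union, offEdge_innerEdges hv.one_notMem, hoff, prunedEdges,
    h.matchGen_union subset_rfl Finset.sdiff_subset]

theorem matchGen_offEdge_cycle (h : IsCyclePlusTree G c) (i : ZMod k) :
    matchGen G (offEdge (innerEdges G c ∪ treeEdges G c) s(c 0, c i)) =
      matchGen G (offEdge (innerEdges G c) s(c 0, c i)) * matchGen G (treeEdges G c) := by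
  rw [offEdge_union, h.offEdge_treeEdges, h.matchGen_union (offEdge_subset _ _) subset_rfl]

theorem matchGen_edgeFinset (h : IsCyclePlusTree G c) (hv : IsThread G c v t)
    (hw : IsThread G c w t) (hvw : v 1 ≠ w 1) (ht : 2 ≤ t) :
    matchGen G G.edgeFinset = matchGen G (innerEdges G c) * matchGen G (treeEdges G c) +
      X * (matchGen G (offEdge (innerEdges G c) s(c 0, c 1)) * matchGen G (treeEdges G c) +
        matchGen G (innerEdges G c) * prunedGen G c v w 2) := by
  have h1 : (1 : ZMod k) ≠ 0 := fun h1 => h.two_ne_zero (by linear_combination 2 * h1)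
  have hhalf : (C (1 / 2) : ℝ[X]) + C (1 / 2) = 1 := by
    rw [← C_add, add_halves, C_1]
  have hexp : matchGen G G.edgeFinset = matchGen G {e ∈ G.edgeFinset | c 0 ∉ e} +
      ∑ y ∈ G.neighborFinset (c 0), X * C (4 * edgeM G s(c 0, y)) *
        matchGen G (offEdge {e ∈ G.edgeFinset | c 0 ∉ e} s(c 0, y)) :=
    matchPoly_edgeFinset G _ (c 0)
  rw [← innerEdges_union_treeEdges, h.sum_neighborFinset_zero hv.one_notMem hw.one_notMem hvw
    (hv.start ▸ hv.adj 0 (by omega)) (hw.start ▸ hw.adj 0 (by omega)),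
    h.edgeWeight_zero (h.degree_eq_two 1 h1),
    h.edgeWeight_zero (h.degree_eq_two (-1) (neg_ne_zero.2 h1)),
    h.edgeWeight_zero (hv.degree 1 le_rfl (by omega)),
    h.edgeWeight_zero (hw.degree 1 le_rfl (by omega)), h.matchGen_union subset_rfl subset_rfl,
    h.matchGen_offEdge_cycle, h.matchGen_offEdge_cycle, h.matchGen_offEdge_innerEdges_neg_one,
    h.matchGen_offEdge_thread hv ht, h.matchGen_offEdge_thread hw ht] at hexp
  rw [hexp, prunedGen]
  linear_combination (X * (matchGen G (offEdge (innerEdges G c) s(c 0, c 1)) *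
    matchGen G (treeEdges G c))) * hhalf

theorem prunedGen_two_mem_lifts (h : IsCyclePlusTree G c) (hper : IsPeriodic G)
    (hv : IsThread G c v t) (hw : IsThread G c w t) (hvw : v 1 ≠ w 1) (ht : 2 ≤ t) :
    prunedGen G c v w 2 ∈ lifts (Int.castRingHom ℝ) := by
  obtain ⟨hE, hT⟩ := h.matchGen_mem_lifts hper
  have hinner := h.matchGen_mem_lifts_of_subset_innerEdges (A := innerEdges G c) subset_rfl
  have hoff := h.matchGen_mem_lifts_of_subset_innerEdges
    (offEdge_subset (innerEdges G c) s(c 0, c 1))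
  rw [h.matchGen_edgeFinset hv hw hvw ht] at hE
  have hmul := mem_lifts_of_add_mem (mul_mem hoff hT)
    (mem_lifts_of_X_mul_mem (mem_lifts_of_add_mem (mul_mem hinner hT) hE))
  refine mem_lifts_of_mul_mem hinner ?_ hmul
  rw [coeff_matchGen, matchSum_zero, pow_zero, one_mul]

theorem prunedGen_mem_lifts (h : IsCyclePlusTree G c) (hper : IsPeriodic G)
    (hv : IsThread G c v t) (hw : IsThread G c w t) (hvw : v 1 ≠ w 1) (hr : r ≤ t) :
    prunedGen G c v w r ∈ lifts (Int.castRingHom ℝ) := by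
  induction r using Nat.strong_induction_on with
  | _ r ih =>
    match r with
    | 0 | 1 =>
      rw [prunedGen_eq_matchGen_treeEdges (by omega)]
      exact (h.matchGen_mem_lifts hper).2
    | 2 => exact h.prunedGen_two_mem_lifts hper hv hw hvw hr
    | r + 3 =>
      have hrec := ih (r + 1) (by omega) (by omega)
      rw [prunedGen_add_one h hv hw hr] at hrec
      exact mem_lifts_of_X_mul_mem
        (mem_lifts_of_add_mem (ih (r + 2) (by omega) (by omega)) hrec)

end IsCyclePlusTree

end VertexExpansion

theorem int_Km_Lm_general [Fintype V] {G : SimpleGraph V} {k : ℕ} {c : ZMod k → V}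
    (hG : IsCyclePlusTree G c) (hper : IsPeriodic G) {t : ℕ} {v w : ℕ → V}
    (hv : IsThread G c v t) (hw : IsThread G c w t) (hvw : v 1 ≠ w 1) (n : ℕ) :
    (∃ m : ℤ, (2 : ℝ) ^ (2 * n) * Km G c n = m) ∧
      ∀ r, n = 0 ∨ r ≤ t → ∃ m : ℤ, (2 : ℝ) ^ (2 * (n : ℤ) - 1) * Lm G c v w n r = m := by
  refine ⟨?_, fun r hr => ?_⟩
  · obtain ⟨m, hm⟩ := (Polynomial.lifts_iff_coeff_lifts _).1 (hG.matchGen_mem_lifts hper).2 n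
    refine ⟨m, ?_⟩
    rw [← eq_intCast (Int.castRingHom ℝ), hm, coeff_matchGen, pow_mul, Km]
    norm_num
  · rcases hr with rfl | hr
    · refine ⟨1, ?_⟩
      simp only [Lm, Kg, matchSum_zero]
      norm_num
    · obtain ⟨m, hm⟩ := (Polynomial.lifts_iff_coeff_lifts _).1
        (hG.prunedGen_mem_lifts hper hv hw hvw hr) n
      exact ⟨m, by rw [← eq_intCast (Int.castRingHom ℝ), hm, coeff_prunedGen]⟩

/-- In the cycle-plus-tree setting, if `G` is periodic and
`deg v₁ = … = deg v_t = deg w₁ = … = deg w_t = 2`, then for every `1 ≤ i ≤ t`: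
(1) `2^(2i)·K_(2i) ∈ ℤ`; (2) `2^(2(i-1)-1)·L_(2(i-1))(2) ∈ ℤ`; and (3) for every
`2 ≤ j ≤ i-1`, `2^(2(i-j)-1)·L_(2(i-j))(2,…,j+1) ∈ ℤ`. -/
theorem int_Km_Lm {V : Type*} [Fintype V] [DecidableEq V] (G : SimpleGraph V)
    (hconn : G.Connected) (k : ℕ) [NeZero k] (hk3 : 3 ≤ k) (hkodd : Odd k)
    (c : ZMod k → V) (hcinj : Function.Injective c)
    (hcadj : ∀ i : ZMod k, G.Adj (c i) (c (i + 1)))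
    (hcard : Fintype.card V = G.edgeFinset.card)
    (hdegu : G.degree (c 0) = 4) (hdegc : ∀ i : ZMod k, i ≠ 0 → G.degree (c i) = 2)
    (hper : IsPeriodic G)
    (t : ℕ) (ht : 1 ≤ t)
    (v w : ℕ → V) (hv0 : v 0 = c 0) (hw0 : w 0 = c 0)
    (hvadj : ∀ s : ℕ, s < t → G.Adj (v s) (v (s + 1)))
    (hwadj : ∀ s : ℕ, s < t → G.Adj (w s) (w (s + 1)))
    (hv1 : v 1 ∉ Set.range c) (hw1 : w 1 ∉ Set.range c) (hvw : v 1 ≠ w 1)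
    (hvnb : ∀ s : ℕ, s + 2 ≤ t → v (s + 2) ≠ v s)
    (hwnb : ∀ s : ℕ, s + 2 ≤ t → w (s + 2) ≠ w s)
    (hvdeg : ∀ s : ℕ, 1 ≤ s → s ≤ t → G.degree (v s) = 2)
    (hwdeg : ∀ s : ℕ, 1 ≤ s → s ≤ t → G.degree (w s) = 2) :
    ∀ i : ℕ, 1 ≤ i → i ≤ t →
      (∃ m : ℤ, (2 : ℝ) ^ (2 * i) * Km G c i = (m : ℝ)) ∧
      (∃ m : ℤ, (2 : ℝ) ^ (2 * ((i : ℤ) - 1) - 1) * Lm G c v w (i - 1) 2 = (m : ℝ)) ∧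
      (∀ j : ℕ, 2 ≤ j → j ≤ i - 1 →
        ∃ m : ℤ, (2 : ℝ) ^ (2 * ((i : ℤ) - (j : ℤ)) - 1) * Lm G c v w (i - j) (j + 1)
          = (m : ℝ)) := by
  have hcard' : Nat.card V = Nat.card G.edgeSet := by
    rw [Nat.card_eq_fintype_card, hcard, SimpleGraph.edgeFinset, Set.toFinset_card,
      Nat.card_eq_fintype_card]
  have hG : IsCyclePlusTree G c := ⟨⟨hk3, hconn, hcinj, hcadj, hcard'⟩, hkodd, hdegu, hdegc⟩
  have hint := int_Km_Lm_general hG hper ⟨hv0, hvadj, hv1, hvnb, hvdeg⟩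
    ⟨hw0, hwadj, hw1, hwnb, hwdeg⟩ hvw
  refine fun i hi hit => ⟨(hint i).1, ?_, fun j _ hji => ?_⟩
  · rw [← Nat.cast_pred hi]
    exact (hint (i - 1)).2 2 (by omega)
  · rw [← Nat.cast_sub (by omega)]
    exact (hint (i - j)).2 (j + 1) (by omega)

end GroverPaper
end

section
/- In the cycle-plus-tree setting, suppose G is periodic and deg(v_1)=…=deg(v_t)=2, deg(w_1)=…=deg(w_t)=2. Then deg(v_{t+1}) = deg(w_{t+1}) and this common degree is 1 or 2. -/
open Matrix

attribute [local instance] Classical.propDecidable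

namespace GroverPaper

variable {V : Type*}

/-!
Write `P` for the transition matrix of `G`, `u = c 0` and `M = 2P`. An eigenvector of `M` with a
nonzero eigenvalue `l` lifts to arcs, where `U + U⁻¹` acts on it as `l`. If `U` has finite order,
`l` is thus an algebraic integer, and `det (1 - X M)` has algebraic integers as coefficients.

Now `det (1 - X M) = A (1 - F)`, where `F` is the generating function of the first returns of the
weighted random walk `M` to `u` and `A` is the determinant of `1 - X M` with `u` deleted. Since
`G - u` is bipartite, `A` is even. An odd first return to `u` must go round the cycle, so the odd
part of `F` has integer coefficients and starts with `X ^ k`. Comparing odd parts shows that the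
coefficients of `A`, and then those of `F`, are algebraic integers.

Up to length `2t + 2`, first returns see the two branches as half lines, except for the walks
turning back at `v (t + 1)` and `w (t + 1)`, which have weight `2 / deg` instead of `1`. Hence the
coefficient of `X ^ (2t + 2)` in `F` is an integer plus `1 / deg v_(t+1) + 1 / deg w_(t+1)`, and
this sum of two unit fractions is an integer only if the degrees are both `1` or both `2`.
-/

section PowerSeries

open PowerSeries Finset.HasAntidiagonal

variable {R : Type*} [CommRing R] {S : Subring R}

theorem coeff_mem_of_coeff_mul_mem {p q : R⟦X⟧} {k : ℕ} (hlt : ∀ j < k, coeff j q = 0)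
    (hk : coeff k q = 1) (hq : ∀ n, coeff n q ∈ S) (hpq : ∀ n, coeff n (p * q) ∈ S) (n : ℕ) :
    coeff n p ∈ S := by
  induction n using Nat.strong_induction_on with
  | _ n ih =>
    have hmem : (n, k) ∈ antidiagonal (n + k) := mem_antidiagonal.mpr rfl
    have hsum : coeff n p +
        ∑ ij ∈ (antidiagonal (n + k)).erase (n, k), coeff ij.1 p * coeff ij.2 q =
          coeff (n + k) (p * q) := by
      rw [coeff_mul, ← Finset.add_sum_erase _ _ hmem, hk, mul_one]
    rw [eq_sub_of_add_eq hsum]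
    refine S.sub_mem (hpq _) (S.sum_mem fun ⟨i, j⟩ hij => ?_)
    simp only [Finset.mem_erase, mem_antidiagonal, ne_eq, Prod.mk.injEq] at hij
    rcases lt_or_ge j k with hj | hj
    · simp [hlt j hj]
    · exact S.mul_mem (ih i (by omega)) (hq j)

/-- The sum of the terms of odd degree of a power series. -/
noncomputable def oddPart (p : R⟦X⟧) : R⟦X⟧ :=
  mk fun n => if Odd n then coeff n p else 0

theorem coeff_oddPart (p : R⟦X⟧) (n : ℕ) :
    coeff n (oddPart p) = if Odd n then coeff n p else 0 :=
  coeff_mk ..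

theorem oddPart_one_sub (p : R⟦X⟧) : oddPart (1 - p) = -oddPart p := by
  ext n
  rw [map_neg, coeff_oddPart, coeff_oddPart, map_sub, coeff_one]
  by_cases hn : Odd n
  · simp [hn, hn.pos.ne']
  · simp [hn]

theorem oddPart_mul_of_oddPart_eq_zero {p : R⟦X⟧} (hp : oddPart p = 0) (q : R⟦X⟧) :
    oddPart (p * q) = p * oddPart q := by
  have hodd {i : ℕ} (hi : Odd i) : coeff i p = 0 := by
    simpa [coeff_oddPart, hi] using congrArg (coeff i) hp
  ext n
  simp only [coeff_oddPart, coeff_mul, Finset.ite_sum_zero]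
  refine Finset.sum_congr rfl fun ⟨i, j⟩ hij => ?_
  obtain rfl : i + j = n := mem_antidiagonal.mp hij
  rcases Nat.even_or_odd i with hi | hi
  · simp [Nat.odd_add', hi]
  · simp [hodd hi]

/-- Taking odd parts gives `oddPart Φ = -(A * oddPart F)`. The leading coefficient of `oddPart F`
being a unit, `A` has coefficients in `S`, and dividing `Φ` by `A` shows the same for `F`. -/
theorem coeff_mem_of_eq_mul_one_sub {Φ A F : R⟦X⟧} (h : Φ = A * (1 - F))
    (hΦ : ∀ n, coeff n Φ ∈ S) (hA : oddPart A = 0) (hA0 : coeff 0 A = 1) {k : ℕ}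
    (hlt : ∀ j < k, coeff j (oddPart F) = 0) (hk : coeff k (oddPart F) = 1)
    (hF : ∀ n, coeff n (oddPart F) ∈ S) (n : ℕ) : coeff n F ∈ S := by
  have hodd : A * oddPart F = -oddPart Φ := by
    rw [h, oddPart_mul_of_oddPart_eq_zero hA, oddPart_one_sub, mul_neg, neg_neg]
  have hAS : ∀ n, coeff n A ∈ S := coeff_mem_of_coeff_mul_mem hlt hk hF fun n => by
    rw [hodd, map_neg, coeff_oddPart]
    split_ifs
    exacts [S.neg_mem (hΦ n), S.neg_mem S.zero_mem]
  have hquot : coeff n (1 - F) ∈ S :=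
    coeff_mem_of_coeff_mul_mem (by simp) hA0 hAS (fun n => by rw [mul_comm, ← h]; exact hΦ n) n
  have hone : coeff n (1 : R⟦X⟧) ∈ S := by
    rw [coeff_one]
    split_ifs
    exacts [S.one_mem, S.zero_mem]
  simpa using S.sub_mem hone hquot

end PowerSeries

section FirstPassage

open PowerSeries

variable {R : Type*} [CommRing R] [Fintype V]

/-- The total weight of the walks of length `n` from each vertex to `u` that reach `u` in their
last step only, a walk being weighted by the product of the entries of `M` along it. -/
noncomputable def firstHit (M : Matrix V V R) (u : V) (n : ℕ) : V → R :=
  M.updateRow u 0 ^ n *ᵥ Pi.single u 1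

theorem firstHit_zero (M : Matrix V V R) (u : V) : firstHit M u 0 = Pi.single u 1 := by
  rw [firstHit, pow_zero, one_mulVec]

theorem firstHit_succ_self (M : Matrix V V R) (u : V) (n : ℕ) : firstHit M u (n + 1) u = 0 := by
  rw [firstHit, pow_succ', ← mulVec_mulVec, mulVec, updateRow_self, zero_dotProduct]

theorem firstHit_succ_of_ne (M : Matrix V V R) {u a : V} (ha : a ≠ u) (n : ℕ) :
    firstHit M u (n + 1) a = (M *ᵥ firstHit M u n) a := by
  rw [firstHit, pow_succ', ← mulVec_mulVec, mulVec, updateRow_ne ha]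
  rfl

/-- The generating function of the total weights of the closed walks at `u` that return to `u` in
their last step only. -/
noncomputable def firstReturnSeries (M : Matrix V V R) (u : V) : R⟦X⟧ :=
  X * mk fun n => (M *ᵥ firstHit M u n) u

theorem constantCoeff_firstReturnSeries (M : Matrix V V R) (u : V) :
    constantCoeff (firstReturnSeries M u) = 0 := by
  simp [firstReturnSeries]

theorem coeff_succ_firstReturnSeries (M : Matrix V V R) (u : V) (n : ℕ) :
    coeff (n + 1) (firstReturnSeries M u) = (M *ᵥ firstHit M u n) u := by
  rw [firstReturnSeries, coeff_succ_X_mul, coeff_mk]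

theorem coe_charpolyRev (M : Matrix V V R) :
    (M.charpolyRev : R⟦X⟧) = (1 - (X : R⟦X⟧) • M.map C).det := by
  rw [← Polynomial.coeToPowerSeries.ringHom_apply, charpolyRev, RingHom.map_det]
  congr 1
  ext a b : 1
  by_cases h : a = b <;> simp [h, X_mul]

theorem one_sub_X_smul_mulVec_firstHit (M : Matrix V V R) (u : V) :
    (1 - (X : R⟦X⟧) • M.map C) *ᵥ (fun a => mk fun n => firstHit M u n a) =
      Pi.single u (1 - firstReturnSeries M u) := by
  ext a n
  rw [sub_mulVec, one_mulVec, smul_mulVec, Pi.sub_apply, Pi.smul_apply, smul_eq_mul, map_sub,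
    coeff_mk]
  have hcoeff (n : ℕ) : coeff n ((M.map C *ᵥ fun a => mk fun n => firstHit M u n a) a) =
      (M *ᵥ firstHit M u n) a := by
    simp [mulVec, dotProduct]
  rcases eq_or_ne a u with rfl | ha <;> rcases n with - | n
  · simp [firstHit_zero, constantCoeff_firstReturnSeries]
  · simp [firstHit_succ_self, coeff_succ_X_mul, hcoeff, coeff_succ_firstReturnSeries, coeff_one]
  · simp [firstHit_zero, ha]
  · simp [firstHit_succ_of_ne M ha, coeff_succ_X_mul, hcoeff, ha]

theorem coe_charpolyRev_eq_mul_one_sub_firstReturnSeries (M : Matrix V V R) (u : V) :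
    (M.charpolyRev : R⟦X⟧) =
      (M.updateRow u 0).charpolyRev * (1 - firstReturnSeries M u) := by
  have hrow : (1 - (X : R⟦X⟧) • M.map C).updateRow u (Pi.single u 1) =
      1 - (X : R⟦X⟧) • (M.updateRow u 0).map C := by
    ext a b : 1
    rcases eq_or_ne a u with rfl | ha
    · simp [Matrix.one_apply, Pi.single_apply, eq_comm]
    · simp [ha]
  have hself : (mk fun n => firstHit M u n u) = (1 : R⟦X⟧) := by
    ext n
    rcases n with - | n <;> simp [firstHit_zero, firstHit_succ_self, coeff_one]
  have h := congrFun (congrArg ((1 - (X : R⟦X⟧) • M.map C).adjugate *ᵥ ·)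
    (one_sub_X_smul_mulVec_firstHit M u)) u
  rw [coe_charpolyRev, coe_charpolyRev, ← hrow]
  simpa [mulVec_mulVec, adjugate_mul, smul_mulVec, adjugate_apply, hself] using h

theorem charpolyRev_smul (r : R) (M : Matrix V V R) :
    (r • M).charpolyRev = M.charpolyRev.comp (Polynomial.C r * Polynomial.X) := by
  rw [charpolyRev, charpolyRev, ← Polynomial.coe_compRingHom_apply, RingHom.map_det]
  congr 1
  ext a b : 1
  by_cases h : a = b <;> simp [h, Polynomial.X_mul, mul_assoc, mul_left_comm]

/-- The hypothesis says that conjugation by the diagonal matrix of the signs `s` negates `M` away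
from `u`, as happens if `M` without `u` is carried by a bipartite graph. -/
theorem charpoly_neg_updateRow_zero {M : Matrix V V R} {u : V} {s : V → R}
    (hs : ∀ a, s a * s a = 1) (hM : ∀ a b, a ≠ u → b ≠ u → s a * M a b * s b = -M a b) :
    (-M.updateRow u 0).charpoly = (M.updateRow u 0).charpoly := by
  set E : Matrix V V R := diagonal fun a => if a = u then 0 else 1 with hE
  set D : Matrix V V R := diagonal fun a => if a = u then 0 else s a with hD
  have hEM : E * M = M.updateRow u 0 := by
    ext a b
    rcases eq_or_ne a u with rfl | ha <;> simp [*]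
  have hEE : E * E = E := by simp [hE]
  have hDD : D * D = E := by simp [hD, hE, hs]
  have hDMD : D * M * D = -(E * M) * E := by
    ext a b
    by_cases ha : a = u <;> by_cases hb : b = u <;> simp [hD, hE, ha, hb, hM a b]
  calc (-M.updateRow u 0).charpoly
      = (E * -(E * M)).charpoly := by rw [mul_neg, ← mul_assoc, hEE, hEM]
    _ = (D * M * D).charpoly := by rw [charpoly_mul_comm, hDMD]
    _ = (M.updateRow u 0).charpoly := by rw [charpoly_mul_comm, ← mul_assoc, hDD, hEM]

theorem oddPart_coe_charpolyRev_updateRow_zero [IsDomain R] [CharZero R] {M : Matrix V V R}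
    {u : V} {s : V → R} (hs : ∀ a, s a * s a = 1)
    (hM : ∀ a b, a ≠ u → b ≠ u → s a * M a b * s b = -M a b) :
    oddPart ((M.updateRow u 0).charpolyRev : R⟦X⟧) = 0 := by
  ext n
  rw [coeff_oddPart, map_zero, ite_eq_right_iff]
  intro hn
  have h : (-M.updateRow u 0).charpolyRev = (M.updateRow u 0).charpolyRev := by
    rw [← reverse_charpoly, charpoly_neg_updateRow_zero hs hM, reverse_charpoly]
  have hcoeff := congrArg (Polynomial.coeff · n) h
  rw [← neg_one_smul R (M.updateRow u 0), charpolyRev_smul] at hcoeff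
  simp only [Polynomial.comp_C_mul_X_coeff, hn.neg_one_pow, mul_neg, mul_one] at hcoeff
  rw [Polynomial.coeff_coe, neg_eq_self.mp hcoeff]

theorem coeff_firstReturnSeries_mem [IsDomain R] [CharZero R] {S : Subring R} {M : Matrix V V R}
    {u : V} {s : V → R} (hS : ∀ n, M.charpolyRev.coeff n ∈ S) (hs : ∀ a, s a * s a = 1)
    (hM : ∀ a b, a ≠ u → b ≠ u → s a * M a b * s b = -M a b) {k : ℕ}
    (hlt : ∀ j < k, coeff j (oddPart (firstReturnSeries M u)) = 0)
    (hk : coeff k (oddPart (firstReturnSeries M u)) = 1)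
    (hF : ∀ n, coeff n (oddPart (firstReturnSeries M u)) ∈ S) (n : ℕ) :
    coeff n (firstReturnSeries M u) ∈ S :=
  coeff_mem_of_eq_mul_one_sub (coe_charpolyRev_eq_mul_one_sub_firstReturnSeries M u)
    (fun n => by rw [Polynomial.coeff_coe]; exact hS n)
    (oddPart_coe_charpolyRev_updateRow_zero hs hM)
    (by rw [Polynomial.coeff_coe, Polynomial.coeff_zero_eq_eval_zero, eval_charpolyRev])
    hlt hk hF n

end FirstPassage

section Spectrum

theorem isIntegral_of_mulVec_eq_smul {R A n : Type*} [CommRing R] [CommRing A] [IsDomain A]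
    [Algebra R A] [Fintype n] [DecidableEq n] {M : Matrix n n A} (hM : IsIntegral R M) {x : n → A}
    (hx : x ≠ 0) {l : A} (hl : M *ᵥ x = l • x) : IsIntegral R l := by
  obtain ⟨p, hp, hpM⟩ := hM
  have hpM : Polynomial.aeval (toLinAlgEquiv' M) (p.map (algebraMap R A)) = 0 := by
    rw [Polynomial.aeval_algHom_apply, Polynomial.aeval_map_algebraMap, Polynomial.aeval_def, hpM,
      map_zero]
  have hpl : (p.map (algebraMap R A)).eval l • x = 0 := by
    rw [← Module.End.aeval_apply_of_mem_apply_eq_smul (f := toLinAlgEquiv' M) hl, hpM,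
      LinearMap.zero_apply]
  exact ⟨p, hp, by rw [← Polynomial.eval_map, (smul_eq_zero.mp hpl).resolve_right hx]⟩

theorem isIntegral_coeff_charpolyRev {R K n : Type*} [CommRing R] [Field K] [IsAlgClosed K]
    [Algebra R K] [Fintype n] [DecidableEq n] {M : Matrix n n K}
    (hM : ∀ (l : K) (y : n → K), y ≠ 0 → M *ᵥ y = l • y → IsIntegral R l) (i : ℕ) :
    IsIntegral R (M.charpolyRev.coeff i) := by
  rw [← reverse_charpoly, Polynomial.coeff_reverse]
  refine M.charpoly.isIntegral_coeff_of_factors (by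
    rw [M.charpoly_monic.leadingCoeff]; exact isIntegral_one)
    (IsAlgClosed.splits _) (fun l hl => ?_) _
  obtain ⟨y, hy, hly⟩ := exists_mulVec_eq_zero_iff.mpr ((M.eval_charpoly l).symm.trans hl)
  refine hM l y hy ?_
  rw [sub_mulVec, sub_eq_zero, scalar_apply] at hly
  rw [← hly, ← smul_one_eq_diagonal, smul_mulVec, one_mulVec]

variable [Fintype V] (G : SimpleGraph V)

theorem groverU_apply (e f : Arc G) :
    groverU G e f = (if f.1.2 = e.1.1 then 2 / (G.degree e.1.1 : ℂ) else 0) -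
      if f = ⟨e.1.swap, e.2.symm⟩ then 1 else 0 := by
  obtain ⟨⟨a, b⟩, hab⟩ := e
  obtain ⟨⟨x, y⟩, hxy⟩ := f
  rw [groverU]
  rcases eq_or_ne y a with rfl | hy
  · simp [eq_comm, apply_ite (2 / (G.degree y : ℂ) - ·)]
  · simp [hy]

theorem sum_arc_ite_target_eq (φ : V → V → ℂ) (a : V) :
    ∑ f : Arc G, (if f.1.2 = a then φ f.1.1 f.1.2 else 0) = ∑ b ∈ G.neighborFinset a, φ b a := by
  rw [← Finset.sum_filter]
  symm
  refine Finset.sum_bij (fun b hb => ⟨(b, a), ((G.mem_neighborFinset a b).mp hb).symm⟩)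
    (by simp) (by simp) ?_ (by simp)
  rintro ⟨⟨x, y⟩, hxy⟩ hy
  obtain rfl : y = a := by simpa using hy
  exact ⟨x, by simpa using hxy.symm, rfl⟩

theorem groverU_mulVec (φ : V → V → ℂ) (e : Arc G) :
    (groverU G *ᵥ fun f => φ f.1.1 f.1.2) e =
      2 / (G.degree e.1.1 : ℂ) * ∑ b ∈ G.neighborFinset e.1.1, φ b e.1.1 - φ e.1.2 e.1.1 := by
  simp only [mulVec, dotProduct, groverU_apply, sub_mul, ite_mul, zero_mul, one_mul,
    Finset.sum_sub_distrib, Finset.sum_ite_eq', Finset.mem_univ, if_true, Finset.mul_sum]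
  rw [sum_arc_ite_target_eq G fun x y => 2 / (G.degree e.1.1 : ℂ) * φ x y]
  rfl

/-- Twice the transition matrix of the isotropic random walk, with complex entries. Thanks to the
factor `2`, its nonzero eigenvalues have the form `z + z⁻¹` for an eigenvalue `z` of the Grover
walk, and so they are integral when the walk is periodic. -/
noncomputable def doubledTransition : Matrix V V ℂ :=
  2 • (transition G).map Complex.ofReal

theorem doubledTransition_apply (a b : V) :
    doubledTransition G a b = if G.Adj a b then 2 / (G.degree a : ℂ) else 0 := by
  by_cases h : G.Adj a b <;> simp [doubledTransition, transition, h, div_eq_mul_inv]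

theorem doubledTransition_mulVec (y : V → ℂ) (a : V) :
    (doubledTransition G *ᵥ y) a = 2 / (G.degree a : ℂ) * ∑ b ∈ G.neighborFinset a, y b := by
  simp only [mulVec, dotProduct, doubledTransition_apply, ite_mul, zero_mul,
    SimpleGraph.neighborFinset_eq_filter, Finset.sum_filter, Finset.mul_sum, mul_ite, mul_zero]

theorem groverU_mulVec_target (y : V → ℂ) :
    (groverU G *ᵥ fun f => y f.1.2) = fun f => y f.1.1 := by
  ext e
  have hdeg : (G.degree e.1.1 : ℂ) ≠ 0 := Nat.cast_ne_zero.mpr e.2.degree_pos_left.ne'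
  rw [groverU_mulVec G (fun _ b => y b), Finset.sum_const,
    SimpleGraph.card_neighborFinset_eq_degree, nsmul_eq_mul]
  field_simp
  ring

theorem groverU_mulVec_origin {l : ℂ} {y : V → ℂ} (hl : doubledTransition G *ᵥ y = l • y) :
    (groverU G *ᵥ fun f => y f.1.1) = l • (fun f => y f.1.1) - fun f => y f.1.2 := by
  ext e
  rw [groverU_mulVec G (fun a _ => y a), ← doubledTransition_mulVec, hl]
  rfl

theorem groverU_add_pow_mulVec_origin {K : ℕ} (hK : groverU G ^ (K + 1) = 1) {l : ℂ} {y : V → ℂ}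
    (hl : doubledTransition G *ᵥ y = l • y) :
    ((groverU G + groverU G ^ K) *ᵥ fun f => y f.1.1) = l • fun f => y f.1.1 := by
  have hinv : (groverU G ^ K *ᵥ fun f => y f.1.1) = fun f : Arc G => y f.1.2 := by
    rw [← groverU_mulVec_target, mulVec_mulVec, ← pow_succ, hK, one_mulVec]
  rw [add_mulVec, hinv, groverU_mulVec_origin G hl, sub_add_cancel]

variable {G}

theorem IsPeriodic.isIntegral_of_doubledTransition_mulVec (hG : IsPeriodic G) {l : ℂ} {y : V → ℂ}
    (hy : y ≠ 0) (hl : doubledTransition G *ᵥ y = l • y) : IsIntegral ℤ l := by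
  obtain ⟨K, hK, hU⟩ := hG
  obtain ⟨K, rfl⟩ := Nat.exists_eq_add_one_of_ne_zero hK.ne'
  rcases eq_or_ne l 0 with rfl | hl0
  · exact isIntegral_zero
  have hint : IsIntegral ℤ (groverU G + groverU G ^ K) := by
    have hU : IsIntegral ℤ (groverU G) := IsIntegral.of_pow hK (hU ▸ isIntegral_one)
    have hmem := Algebra.self_mem_adjoin_singleton ℤ (groverU G)
    exact IsIntegral.of_mem_of_fg _ hU.fg_adjoin_singleton _ (add_mem hmem (pow_mem hmem K))
  refine isIntegral_of_mulVec_eq_smul hint ?_ (groverU_add_pow_mulVec_origin G hU hl)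
  obtain ⟨a, ha⟩ := Function.ne_iff.mp hy
  have hla := congrFun hl a
  obtain ⟨b, hb⟩ : (G.neighborFinset a).Nonempty := by
    by_contra h
    rw [doubledTransition_mulVec, Finset.not_nonempty_iff_eq_empty.mp h, Finset.sum_empty, mul_zero]
      at hla
    exact mul_ne_zero hl0 ha hla.symm
  exact Function.ne_iff.mpr ⟨⟨(a, b), (G.mem_neighborFinset a b).mp hb⟩, ha⟩

theorem IsPeriodic.isIntegral_coeff_charpolyRev (hG : IsPeriodic G) (i : ℕ) :
    IsIntegral ℤ ((doubledTransition G).charpolyRev.coeff i) :=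
  GroverPaper.isIntegral_coeff_charpolyRev
    (fun _ _ => hG.isIntegral_of_doubledTransition_mulVec) i

end Spectrum

section HalfLine

/-- The number of `m`-step walks on the half line `ℕ` from `s` to `0` that reach `0` in their last
step only. -/
def halfLineHit : ℕ → ℕ → ℕ
  | 0, s => if s = 0 then 1 else 0
  | _ + 1, 0 => 0
  | m + 1, s + 1 => halfLineHit m s + halfLineHit m (s + 2)

theorem halfLineHit_of_lt {m s : ℕ} (h : m < s) : halfLineHit m s = 0 := by
  induction m generalizing s with
  | zero => exact if_neg h.ne'
  | succ m ih =>
    obtain ⟨s, rfl⟩ := Nat.exists_eq_add_one_of_ne_zero (Nat.ne_zero_of_lt h)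
    rw [halfLineHit, ih (by omega), ih (by omega)]

theorem halfLineHit_self (m : ℕ) : halfLineHit m m = 1 := by
  induction m with
  | zero => rfl
  | succ m ih => rw [halfLineHit, ih, halfLineHit_of_lt (by omega)]

theorem halfLineHit_of_odd {m s : ℕ} (h : Odd (m + s)) : halfLineHit m s = 0 := by
  induction m generalizing s with
  | zero => exact if_neg (by rintro rfl; simp at h)
  | succ m ih =>
    rcases s with - | s
    · rfl
    · rw [halfLineHit, ih (by grind), ih (by grind)]

variable {R : Type*} [Ring R]

/-- A family `f m s` satisfying for `s < L` the recursion of `halfLineHit`, and agreeing with it at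
the end `s = L` of the segment up to time `N`. -/
structure IsHalfLineHitUntil (f : ℕ → ℕ → R) (L N : ℕ) : Prop where
  zero : ∀ s < L, f 0 s = if s = 0 then 1 else 0
  succ_zero : ∀ m, f (m + 1) 0 = 0
  succ_succ : ∀ m s, s + 1 < L → f (m + 1) (s + 1) = f m s + f m (s + 2)
  eq_end : ∀ m < N, f m L = halfLineHit m L

namespace IsHalfLineHitUntil

variable {f : ℕ → ℕ → R} {L N : ℕ}

theorem eq_halfLineHit (hf : IsHalfLineHitUntil f L N) {m s : ℕ} (hs : s ≤ L)
    (hlt : m + s < N + L) : f m s = halfLineHit m s := by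
  induction m generalizing s with
  | zero =>
    rcases hs.eq_or_lt with rfl | hs
    · exact hf.eq_end 0 (by omega)
    · rw [hf.zero s hs, halfLineHit, Nat.cast_ite, Nat.cast_one, Nat.cast_zero]
  | succ m ih =>
    rcases hs.eq_or_lt with rfl | hs
    · exact hf.eq_end (m + 1) (by omega)
    rcases s with - | s
    · rw [hf.succ_zero, halfLineHit, Nat.cast_zero]
    · rw [hf.succ_succ m s hs, ih (by omega) (by omega), ih (by omega) (by omega), halfLineHit,
        Nat.cast_add]

/-- The discrepancy at the end of the segment travels undamped towards the root. -/
theorem eq_halfLineHit_add (hf : IsHalfLineHitUntil f L N) {m s : ℕ} (hs0 : 0 < s) (hs : s ≤ L)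
    (heq : m + s = N + L) : f m s = halfLineHit m s + (f N L - halfLineHit N L) := by
  induction m generalizing s with
  | zero =>
    obtain ⟨rfl, rfl⟩ : N = 0 ∧ s = L := by omega
    rw [add_sub_cancel]
  | succ m ih =>
    rcases hs.eq_or_lt with rfl | hs
    · obtain rfl : m + 1 = N := by omega
      rw [add_sub_cancel]
    obtain ⟨s, rfl⟩ := Nat.exists_eq_add_one_of_ne_zero hs0.ne'
    rw [hf.succ_succ m s hs, hf.eq_halfLineHit (by omega) (by omega),
      ih (by omega) (by omega) (by omega), halfLineHit, Nat.cast_add, add_assoc]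

end IsHalfLineHitUntil

end HalfLine

section Tree

theorem eq_of_adj_of_dist_eq_add_one {T : SimpleGraph V} (hT : T.IsTree) {r a b b' : V}
    (hb : T.Adj a b) (hb' : T.Adj a b') (hd : T.dist r a = T.dist r b + 1)
    (hd' : T.dist r a = T.dist r b' + 1) : b = b' := by
  obtain ⟨p, hp⟩ := hT.connected.exists_walk_length_eq_dist r a
  have hpath := p.isPath_of_length_eq_dist hp
  have hpen {x : V} (hx : T.Adj a x) (hdx : T.dist r a = T.dist r x + 1) : x = p.penultimate := by
    obtain ⟨q, hq⟩ := hT.connected.exists_walk_length_eq_dist r x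
    refine hT.isAcyclic.eq_penultimate_of_adj_end hpath hx
      (hT.isAcyclic.mem_support_of_ne_mem_support_of_adj_of_isPath hpath
        (q.isPath_of_length_eq_dist hq) hx fun hmem => ?_)
    have hle := T.dist_le (q.takeUntil a hmem)
    have hlen := q.length_takeUntil_le_length hmem
    omega
  rw [hpen hb hd, hpen hb' hd']

theorem neg_one_pow_dist_mul_mul {R : Type*} [CommRing R] {T : SimpleGraph V} (hT : T.IsTree)
    (r : V) {a b : V} (hab : T.Adj a b) (x : R) :
    (-1) ^ T.dist r a * x * (-1) ^ T.dist r b = -x := by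
  have hodd : Odd (T.dist r a + T.dist r b) := by
    rcases hT.dist_eq_dist_add_one_of_adj r hab with h | h <;> rw [h] <;> grind
  rw [mul_right_comm, ← pow_add, hodd.neg_one_pow, neg_one_mul]

theorem neighborFinset_eq_of_forall_adj [Fintype V] {G : SimpleGraph V} {a : V} {s : Finset V}
    (hs : ∀ b ∈ s, G.Adj a b) (hcard : G.degree a ≤ s.card) : G.neighborFinset a = s :=
  (Finset.eq_of_subset_of_card_le (fun b hb => (G.mem_neighborFinset a b).mpr (hs b hb))
    (by rwa [SimpleGraph.card_neighborFinset_eq_degree])).symm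

theorem isAcyclic_deleteEdges_of_not_isBridge [Finite V] {G : SimpleGraph V} (hG : G.Connected)
    (hcard : Nat.card G.edgeSet = Nat.card V) {e : Sym2 V} (he : e ∈ G.edgeSet)
    (hbridge : ¬G.IsBridge e) : (G.deleteEdges {e}).IsAcyclic := by
  refine (SimpleGraph.isTree_iff_connected_and_card.mpr ⟨?_, ?_⟩).isAcyclic
  · induction e with
    | _ a b => exact hG.connected_delete_edge_of_not_isBridge hbridge
  · rw [SimpleGraph.edgeSet_deleteEdges, ← hcard, Nat.card_coe_set_eq, Nat.card_coe_set_eq]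
    exact Set.ncard_sdiff_singleton_add_one he (Set.toFinite _)

end Tree

section Branch

variable {G T : SimpleGraph V} {u a b b' : V} {B : Set V}

/-- The vertices in `B` form a forest hanging off `u`: all edges of `G` meeting `B` lie in the tree
`T`, and an edge leaves `B` only towards `u`. -/
structure IsPendantForest (G T : SimpleGraph V) (u : V) (B : Set V) : Prop where
  isTree : T.IsTree
  root_notMem : u ∉ B
  adj_of_adj : ∀ a b, a ∈ B → G.Adj a b → T.Adj a b
  mem_or_eq_root : ∀ a b, a ∈ B → G.Adj a b → b ∈ B ∨ b = u

namespace IsPendantForest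

theorem ne_root (h : IsPendantForest G T u B) (ha : a ∈ B) : a ≠ u :=
  ne_of_mem_of_not_mem ha h.root_notMem

theorem dist_eq_of_adj (h : IsPendantForest G T u B) (ha : a ∈ B) (hab : G.Adj a b) :
    T.dist u a = T.dist u b + 1 ∨ T.dist u b = T.dist u a + 1 :=
  h.isTree.dist_eq_dist_add_one_of_adj u (h.adj_of_adj a b ha hab)

theorem mem_of_adj_of_dist_pos (h : IsPendantForest G T u B) (ha : a ∈ B) (hab : G.Adj a b)
    (hb : 0 < T.dist u b) : b ∈ B :=
  (h.mem_or_eq_root a b ha hab).resolve_right fun he => by simp [he] at hb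

end IsPendantForest

variable [Fintype V]

theorem firstHit_doubledTransition_succ (ha : a ≠ u) (m : ℕ) :
    firstHit (doubledTransition G) u (m + 1) a =
      2 / (G.degree a : ℂ) * ∑ b ∈ G.neighborFinset a, firstHit (doubledTransition G) u m b := by
  rw [firstHit_succ_of_ne _ ha, doubledTransition_mulVec]

theorem firstHit_doubledTransition_succ_of_degree_eq_two (ha : a ≠ u) (hb : G.Adj a b)
    (hb' : G.Adj a b') (hne : b ≠ b') (hdeg : G.degree a = 2) (m : ℕ) :
    firstHit (doubledTransition G) u (m + 1) a =
      firstHit (doubledTransition G) u m b + firstHit (doubledTransition G) u m b' := by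
  have hN : G.neighborFinset a = {b, b'} :=
    neighborFinset_eq_of_forall_adj (by simp [hb, hb']) (by rw [hdeg, Finset.card_pair hne])
  rw [firstHit_doubledTransition_succ ha, hN, Finset.sum_pair hne, hdeg, Nat.cast_ofNat,
    div_self two_ne_zero, one_mul]

theorem neg_one_pow_dist_mul_doubledTransition_mul (hT : T.IsTree) {x y : V}
    (hle : G.deleteEdges {s(x, y)} ≤ T) (ha : a ≠ x) (hb : b ≠ x) :
    (-1) ^ T.dist x a * doubledTransition G a b * (-1) ^ T.dist x b =
      -doubledTransition G a b := by
  by_cases hab : G.Adj a b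
  · refine neg_one_pow_dist_mul_mul hT x (hle (SimpleGraph.deleteEdges_adj.mpr ⟨hab, ?_⟩)) _
    intro he
    rcases Sym2.eq_iff.mp (Set.mem_singleton_iff.mp he) with ⟨ha', -⟩ | ⟨-, hb'⟩
    exacts [ha ha', hb hb']
  · rw [doubledTransition_apply, if_neg hab, mul_zero, zero_mul, neg_zero]

namespace IsPendantForest

theorem exists_eq_dist_add_of_firstHit_ne_zero (h : IsPendantForest G T u B) (ha : a ∈ B) {m : ℕ}
    (hne : firstHit (doubledTransition G) u m a ≠ 0) : ∃ r, m = T.dist u a + 2 * r := by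
  induction m generalizing a with
  | zero => simp [firstHit_zero, h.ne_root ha] at hne
  | succ m ih =>
    rw [firstHit_doubledTransition_succ (h.ne_root ha)] at hne
    obtain ⟨b, hb, hbne⟩ := Finset.exists_ne_zero_of_sum_ne_zero (right_ne_zero_of_mul hne)
    have hab : G.Adj a b := (G.mem_neighborFinset a b).mp hb
    have hdist := h.dist_eq_of_adj ha hab
    rcases h.mem_or_eq_root a b ha hab with hbB | rfl
    · obtain ⟨r, hr⟩ := ih hbB hbne
      rcases hdist with hdist | hdist
      exacts [⟨r, by omega⟩, ⟨r + 1, by omega⟩]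
    · rw [T.dist_self] at hdist
      rcases m with - | m
      · exact ⟨0, by omega⟩
      · exact absurd (firstHit_succ_self _ _ _) hbne

theorem firstHit_eq_zero_of_lt (h : IsPendantForest G T u B) (ha : a ∈ B) {m : ℕ}
    (hm : m < T.dist u a) : firstHit (doubledTransition G) u m a = 0 := by
  by_contra hne
  obtain ⟨r, hr⟩ := h.exists_eq_dist_add_of_firstHit_ne_zero ha hne
  omega

theorem firstHit_eq_zero_of_even (h : IsPendantForest G T u B) (ha : a ∈ B) (hua : G.Adj u a)
    {m : ℕ} (hm : Even m) : firstHit (doubledTransition G) u m a = 0 := by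
  by_contra hne
  obtain ⟨r, hr⟩ := h.exists_eq_dist_add_of_firstHit_ne_zero ha hne
  have hdist := h.dist_eq_of_adj ha hua.symm
  rw [T.dist_self] at hdist
  grind

end IsPendantForest

/-- A non-backtracking walk `p 0, …, p (t + 1)` in `G` from `u` into `B` whose inner vertices
`p 1, …, p t` have degree two; the values of `p` beyond `t + 1` play no role. -/
structure IsBranch (G : SimpleGraph V) (u : V) (B : Set V) (t : ℕ) (p : ℕ → V) : Prop where
  start : p 0 = u
  adj : ∀ s < t + 1, G.Adj (p s) (p (s + 1))
  one_mem : p 1 ∈ B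
  ne_of_add_two : ∀ s, s + 2 ≤ t + 1 → p (s + 2) ≠ p s
  degree_eq_two : ∀ s, 1 ≤ s → s ≤ t → G.degree (p s) = 2

namespace IsBranch

variable {t : ℕ} {p : ℕ → V}

theorem adj_one (hp : IsBranch G u B t p) : G.Adj u (p 1) :=
  hp.start ▸ hp.adj 0 t.succ_pos

theorem mem_and_dist_eq (hp : IsBranch G u B t p) (h : IsPendantForest G T u B) {s : ℕ}
    (hs : s ≤ t) : p (s + 1) ∈ B ∧ T.dist u (p s) = s ∧ T.dist u (p (s + 1)) = s + 1 := by
  induction s with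
  | zero =>
    have hd := h.dist_eq_of_adj hp.one_mem hp.adj_one.symm
    rw [T.dist_self] at hd
    exact ⟨hp.one_mem, by rw [hp.start, T.dist_self], by rw [zero_add]; omega⟩
  | succ s ih =>
    obtain ⟨hmem, hds, hd⟩ := ih (by omega)
    have hnext := hp.adj (s + 1) (by omega)
    have hprev := (hp.adj s (by omega)).symm
    have hd' : T.dist u (p (s + 1 + 1)) = s + 1 + 1 := by
      rcases h.dist_eq_of_adj hmem hnext with hback | hback
      · refine absurd ?_ (hp.ne_of_add_two s (by omega))
        exact eq_of_adj_of_dist_eq_add_one h.isTree (h.adj_of_adj _ _ hmem hnext)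
          (h.adj_of_adj _ _ hmem hprev) hback (by rw [hd, hds])
      · rw [hback, hd]
    exact ⟨h.mem_of_adj_of_dist_pos hmem hnext (by omega), hd, hd'⟩

theorem mem (hp : IsBranch G u B t p) (h : IsPendantForest G T u B) {s : ℕ} (hs : s ≤ t) :
    p (s + 1) ∈ B :=
  (hp.mem_and_dist_eq h hs).1

theorem dist_eq (hp : IsBranch G u B t p) (h : IsPendantForest G T u B) {s : ℕ} (hs : s ≤ t) :
    T.dist u (p (s + 1)) = s + 1 :=
  (hp.mem_and_dist_eq h hs).2.2

/-- Only the walk straight down the branch contributes. -/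
theorem firstHit_eq (hp : IsBranch G u B t p) (h : IsPendantForest G T u B) {s : ℕ} (hs : s ≤ t) :
    firstHit (doubledTransition G) u (s + 1) (p (s + 1)) =
      2 / (G.degree (p (s + 1)) : ℂ) * firstHit (doubledTransition G) u s (p s) := by
  have hmem := hp.mem h hs
  have hprev := (hp.adj s (by omega)).symm
  rw [firstHit_doubledTransition_succ (h.ne_root hmem),
    Finset.sum_eq_single_of_mem (p s) ((G.mem_neighborFinset _ _).mpr hprev)]
  intro b hb hbne
  have hab : G.Adj (p (s + 1)) b := (G.mem_neighborFinset _ _).mp hb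
  obtain ⟨-, hds, hd⟩ := hp.mem_and_dist_eq h hs
  have hdb : T.dist u b = s + 2 := by
    rcases h.dist_eq_of_adj hmem hab with hback | hback
    · refine absurd ?_ hbne
      exact eq_of_adj_of_dist_eq_add_one h.isTree (h.adj_of_adj _ _ hmem hab)
        (h.adj_of_adj _ _ hmem hprev) hback (by rw [hd, hds])
    · rw [hback, hd]
  exact h.firstHit_eq_zero_of_lt (h.mem_of_adj_of_dist_pos hmem hab (by omega)) (by omega)

theorem firstHit_self (hp : IsBranch G u B t p) (h : IsPendantForest G T u B) {s : ℕ}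
    (hs : s ≤ t) : firstHit (doubledTransition G) u s (p s) = 1 := by
  induction s with
  | zero => rw [firstHit_zero, hp.start, Pi.single_eq_same]
  | succ s ih =>
    rw [hp.firstHit_eq h (by omega), ih (by omega), hp.degree_eq_two _ (by omega) hs,
      Nat.cast_ofNat, div_self two_ne_zero, one_mul]

theorem firstHit_last (hp : IsBranch G u B t p) (h : IsPendantForest G T u B) :
    firstHit (doubledTransition G) u (t + 1) (p (t + 1)) = 2 / (G.degree (p (t + 1)) : ℂ) := by
  rw [hp.firstHit_eq h le_rfl, hp.firstHit_self h le_rfl, mul_one]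

theorem isHalfLineHitUntil (hp : IsBranch G u B t p) (h : IsPendantForest G T u B) :
    IsHalfLineHitUntil (fun m s => firstHit (doubledTransition G) u m (p s)) (t + 1) (t + 1) where
  zero s hs := by
    rcases s with - | s
    · simp only [firstHit_zero, hp.start, Pi.single_eq_same, if_true]
    · simp [firstHit_zero, h.ne_root (hp.mem h (s := s) (by omega))]
  succ_zero m := by simp only [hp.start, firstHit_succ_self]
  succ_succ m s hs :=
    firstHit_doubledTransition_succ_of_degree_eq_two (h.ne_root (hp.mem h (by omega)))
      (hp.adj s (by omega)).symm (hp.adj (s + 1) hs) (hp.ne_of_add_two s hs).symm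
      (hp.degree_eq_two (s + 1) (by omega) (by omega)) m
  eq_end m hm := by
    rw [halfLineHit_of_lt hm, Nat.cast_zero]
    exact h.firstHit_eq_zero_of_lt (hp.mem h le_rfl) (by rwa [hp.dist_eq h le_rfl])

theorem firstHit_one (hp : IsBranch G u B t p) (h : IsPendantForest G T u B) :
    firstHit (doubledTransition G) u (2 * t + 1) (p 1) =
      halfLineHit (2 * t + 1) 1 + (2 / (G.degree (p (t + 1)) : ℂ) - 1) := by
  rw [(hp.isHalfLineHitUntil h).eq_halfLineHit_add one_pos (by omega) (by omega),
    hp.firstHit_last h, halfLineHit_self, Nat.cast_one]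

end IsBranch

end Branch

section PendantCycle

variable {G T : SimpleGraph V} {k : ℕ} {c : ZMod k → V}

theorem natCast_zmod_ne_zero {j : ℕ} (hj : 0 < j) (hjk : j < k) : (j : ZMod k) ≠ 0 := fun h =>
  Nat.not_le_of_lt hjk (Nat.le_of_dvd hj ((ZMod.natCast_eq_zero_iff j k).mp h))

theorem sub_one_ne_add_one (hk : 3 ≤ k) (i : ZMod k) : i - 1 ≠ i + 1 := fun h =>
  natCast_zmod_ne_zero (j := 2) two_pos hk (by push_cast; linear_combination -h)

theorem not_isBridge_of_forall_adj (hk : 3 ≤ k) (hc : Function.Injective c)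
    (hadj : ∀ i, G.Adj (c i) (c (i + 1))) : ¬G.IsBridge s(c 0, c (-1)) := by
  rw [SimpleGraph.isBridge_iff, not_not]
  have hstep (j : ℕ) (hj : j + 1 < k) :
      (G.deleteEdges {s(c 0, c (-1))}).Adj (c j) (c ↑(j + 1)) := by
    refine SimpleGraph.deleteEdges_adj.mpr ⟨by simpa using hadj j, fun he => ?_⟩
    rcases Sym2.eq_iff.mp (Set.mem_singleton_iff.mp he) with ⟨h0, hneg⟩ | ⟨-, h0⟩
    · refine sub_one_ne_add_one hk (0 : ZMod k) ?_
      rw [zero_sub, ← hc hneg, Nat.cast_succ, hc h0]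
    · exact natCast_zmod_ne_zero j.succ_pos hj (hc h0)
  have hreach (j : ℕ) (hj : j < k) :
      (G.deleteEdges {s(c 0, c (-1))}).Reachable (c 0) (c j) := by
    induction j with
    | zero => rw [Nat.cast_zero]
    | succ j ih => exact (ih (by omega)).trans (hstep j hj).reachable
  have hlast := hreach (k - 1) (by omega)
  rwa [Nat.cast_sub (by omega), ZMod.natCast_self, Nat.cast_one, zero_sub] at hlast

variable [Fintype V]

/-- A cycle `c` of length `k` in `G` all of whose vertices other than `c 0` have degree two. -/
structure IsPendantCycle (G : SimpleGraph V) {k : ℕ} (c : ZMod k → V) : Prop where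
  three_le : 3 ≤ k
  injective : Function.Injective c
  adj : ∀ i, G.Adj (c i) (c (i + 1))
  degree_eq_two : ∀ i, i ≠ 0 → G.degree (c i) = 2

namespace IsPendantCycle

theorem adj_sub_one (hc : IsPendantCycle G c) (i : ZMod k) : G.Adj (c i) (c (i - 1)) := by
  simpa using (hc.adj (i - 1)).symm

theorem apply_sub_one_ne_apply_add_one (hc : IsPendantCycle G c) (i : ZMod k) :
    c (i - 1) ≠ c (i + 1) :=
  hc.injective.ne (sub_one_ne_add_one hc.three_le i)

theorem firstHit_succ_of_ne_zero (hc : IsPendantCycle G c) {i : ZMod k} (hi : i ≠ 0) (m : ℕ) :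
    firstHit (doubledTransition G) (c 0) (m + 1) (c i) =
      firstHit (doubledTransition G) (c 0) m (c (i - 1)) +
        firstHit (doubledTransition G) (c 0) m (c (i + 1)) :=
  firstHit_doubledTransition_succ_of_degree_eq_two (hc.injective.ne hi) (hc.adj_sub_one i)
    (hc.adj i) (hc.apply_sub_one_ne_apply_add_one i) (hc.degree_eq_two i hi) m

theorem isIntegral_firstHit (hc : IsPendantCycle G c) (m : ℕ) (i : ZMod k) :
    IsIntegral ℤ (firstHit (doubledTransition G) (c 0) m (c i)) := by
  induction m generalizing i with
  | zero =>
    rw [firstHit_zero, Pi.single_apply]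
    split_ifs
    exacts [isIntegral_one, isIntegral_zero]
  | succ m ih =>
    rcases eq_or_ne i 0 with rfl | hi
    · rw [firstHit_succ_self]
      exact isIntegral_zero
    · rw [hc.firstHit_succ_of_ne_zero hi]
      exact (ih _).add (ih _)

theorem firstHit_neg (hc : IsPendantCycle G c) (m : ℕ) (i : ZMod k) :
    firstHit (doubledTransition G) (c 0) m (c (-i)) =
      firstHit (doubledTransition G) (c 0) m (c i) := by
  induction m generalizing i with
  | zero => simp only [firstHit_zero, Pi.single_apply, hc.injective.eq_iff, neg_eq_zero]
  | succ m ih =>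
    rcases eq_or_ne i 0 with rfl | hi
    · rw [neg_zero]
    · rw [hc.firstHit_succ_of_ne_zero (neg_ne_zero.mpr hi), hc.firstHit_succ_of_ne_zero hi,
        ← ih (i - 1), ← ih (i + 1), neg_sub', neg_add', sub_neg_eq_add, add_comm]

theorem isHalfLineHitUntil (hc : IsPendantCycle G c) :
    IsHalfLineHitUntil (fun m s => firstHit (doubledTransition G) (c 0) m (c s)) k 0 where
  zero s hs := by
    rcases s.eq_zero_or_pos with rfl | hs0
    · simp only [firstHit_zero, Nat.cast_zero, Pi.single_eq_same, if_true]
    · simp [firstHit_zero, hc.injective.eq_iff, natCast_zmod_ne_zero hs0 hs, hs0.ne']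
  succ_zero m := by simp only [Nat.cast_zero, firstHit_succ_self]
  succ_succ m s hs := by
    have hcast : ((s + 2 : ℕ) : ZMod k) = s + 1 + 1 := by push_cast; ring
    have h := hc.firstHit_succ_of_ne_zero (natCast_zmod_ne_zero s.succ_pos hs) m
    rwa [Nat.cast_succ, add_sub_cancel_right, ← hcast, ← Nat.cast_succ] at h
  eq_end m hm := absurd hm m.not_lt_zero

theorem firstHit_one_of_lt (hc : IsPendantCycle G c) {m : ℕ} (hm : m + 1 < k)
    (hodd : Odd (m + 1)) : firstHit (doubledTransition G) (c 0) m (c 1) = 0 := by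
  have h := hc.isHalfLineHitUntil.eq_halfLineHit (m := m) (s := 1) (by omega) (by omega)
  rwa [halfLineHit_of_odd hodd, Nat.cast_zero, Nat.cast_one] at h

/-- The `1` counts the walk once round the cycle. -/
theorem firstHit_one_of_eq (hc : IsPendantCycle G c) {m : ℕ} (hm : m + 1 = k)
    (hodd : Odd (m + 1)) : firstHit (doubledTransition G) (c 0) m (c 1) = 1 := by
  have hk := hc.three_le
  have h := hc.isHalfLineHitUntil.eq_halfLineHit_add (m := m) (s := 1) one_pos (by omega)
    (by omega)
  rwa [halfLineHit_of_odd hodd, halfLineHit_of_lt (by omega : 0 < k), ZMod.natCast_self,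
    firstHit_zero, Pi.single_eq_same, Nat.cast_zero, Nat.cast_one, sub_zero, zero_add] at h

theorem mem_range_of_adj (hc : IsPendantCycle G c) {i : ZMod k} (hi : i ≠ 0) {a : V}
    (ha : G.Adj (c i) a) : a ∈ Set.range c := by
  have hN : G.neighborFinset (c i) = {c (i - 1), c (i + 1)} :=
    neighborFinset_eq_of_forall_adj (by simp [hc.adj, hc.adj_sub_one])
      (by rw [hc.degree_eq_two i hi, Finset.card_pair (hc.apply_sub_one_ne_apply_add_one i)])
  have hmem := hN ▸ (G.mem_neighborFinset (c i) a).mpr ha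
  rcases Finset.mem_insert.mp hmem with rfl | h
  · exact Set.mem_range_self _
  · exact Finset.mem_singleton.mp h ▸ Set.mem_range_self _

theorem isPendantForest (hc : IsPendantCycle G c) (hT : T.IsTree)
    (hle : G.deleteEdges {s(c 0, c (-1))} ≤ T) :
    IsPendantForest G T (c 0) (Set.range c)ᶜ where
  isTree := hT
  root_notMem h := h (Set.mem_range_self 0)
  adj_of_adj a b ha hab := by
    refine hle (SimpleGraph.deleteEdges_adj.mpr ⟨hab, fun he => ha ?_⟩)
    rcases Sym2.eq_iff.mp (Set.mem_singleton_iff.mp he) with ⟨rfl, -⟩ | ⟨rfl, -⟩ <;>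
      exact Set.mem_range_self _
  mem_or_eq_root a b ha hab := by
    by_contra! hb
    obtain ⟨i, rfl⟩ := Set.notMem_compl_iff.mp hb.1
    exact ha (hc.mem_range_of_adj (fun hi => hb.2 (by rw [hi])) hab.symm)

variable {v w : V}

theorem coeff_succ_firstReturnSeries (hc : IsPendantCycle G c) (hdeg : G.degree (c 0) = 4)
    (hv : G.Adj (c 0) v) (hw : G.Adj (c 0) w) (hvc : v ∉ Set.range c) (hwc : w ∉ Set.range c)
    (hvw : v ≠ w) (m : ℕ) :
    PowerSeries.coeff (m + 1) (firstReturnSeries (doubledTransition G) (c 0)) =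
      firstHit (doubledTransition G) (c 0) m (c 1) +
        (firstHit (doubledTransition G) (c 0) m v + firstHit (doubledTransition G) (c 0) m w) /
          2 := by
  have hc1 : G.Adj (c 0) (c 1) := by simpa using hc.adj 0
  have hcneg : G.Adj (c 0) (c (-1)) := by simpa using hc.adj_sub_one 0
  have hne : c 1 ≠ c (-1) := by simpa using (hc.apply_sub_one_ne_apply_add_one 0).symm
  have hv' (i : ZMod k) : c i ≠ v := fun hi => hvc ⟨i, hi⟩
  have hw' (i : ZMod k) : c i ≠ w := fun hi => hwc ⟨i, hi⟩
  have h1 : c 1 ∉ ({c (-1), v, w} : Finset V) := by simp [hne, hv', hw']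
  have hneg : c (-1) ∉ ({v, w} : Finset V) := by simp [hv', hw']
  have hN : G.neighborFinset (c 0) = {c 1, c (-1), v, w} :=
    neighborFinset_eq_of_forall_adj (by simp [hc1, hcneg, hv, hw])
      (by rw [hdeg, Finset.card_insert_of_notMem h1, Finset.card_insert_of_notMem hneg,
        Finset.card_pair hvw])
  rw [GroverPaper.coeff_succ_firstReturnSeries, doubledTransition_mulVec, hdeg, hN,
    Finset.sum_insert h1, Finset.sum_insert hneg, Finset.sum_pair hvw, hc.firstHit_neg]
  push_cast
  ring

theorem coeff_oddPart_firstReturnSeries (hc : IsPendantCycle G c)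
    (hB : IsPendantForest G T (c 0) (Set.range c)ᶜ) (hdeg : G.degree (c 0) = 4)
    (hv : G.Adj (c 0) v) (hw : G.Adj (c 0) w) (hvc : v ∉ Set.range c) (hwc : w ∉ Set.range c)
    (hvw : v ≠ w) (n : ℕ) :
    PowerSeries.coeff n (oddPart (firstReturnSeries (doubledTransition G) (c 0))) =
      if Odd n then firstHit (doubledTransition G) (c 0) (n - 1) (c 1) else 0 := by
  rw [coeff_oddPart]
  refine if_ctx_congr Iff.rfl (fun hn => ?_) fun _ => rfl
  obtain ⟨m, rfl⟩ := Nat.exists_eq_add_one_of_ne_zero hn.pos.ne'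
  have hm : Even m := by grind
  rw [hc.coeff_succ_firstReturnSeries hdeg hv hw hvc hwc hvw, hB.firstHit_eq_zero_of_even hvc hv hm,
    hB.firstHit_eq_zero_of_even hwc hw hm, add_zero, zero_div, add_zero, Nat.add_sub_cancel]

theorem isIntegral_coeff_firstReturnSeries (hc : IsPendantCycle G c) (hk : Odd k)
    (hT : T.IsTree) (hle : G.deleteEdges {s(c 0, c (-1))} ≤ T) (hper : IsPeriodic G)
    (hdeg : G.degree (c 0) = 4) (hv : G.Adj (c 0) v) (hw : G.Adj (c 0) w)
    (hvc : v ∉ Set.range c) (hwc : w ∉ Set.range c) (hvw : v ≠ w) (n : ℕ) :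
    IsIntegral ℤ (PowerSeries.coeff n (firstReturnSeries (doubledTransition G) (c 0))) := by
  have hodd := hc.coeff_oddPart_firstReturnSeries (hc.isPendantForest hT hle) hdeg hv hw hvc hwc hvw
  refine coeff_firstReturnSeries_mem (S := (integralClosure ℤ ℂ).toSubring)
    (s := fun a => (-1) ^ T.dist (c 0) a) (k := k) hper.isIntegral_coeff_charpolyRev
    (fun a => by rw [← mul_pow, neg_one_mul, neg_neg, one_pow])
    (fun _ _ => neg_one_pow_dist_mul_doubledTransition_mul hT hle)
    (fun j hj => ?_) ?_ (fun j => ?_) n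
  · rw [hodd]
    refine ite_eq_right_iff.mpr fun hj' => ?_
    have hpos := hj'.pos
    exact hc.firstHit_one_of_lt (by omega) (by rwa [Nat.sub_add_cancel hpos])
  · have hsub : k - 1 + 1 = k := Nat.sub_add_cancel hk.pos
    rw [hodd, if_pos hk, hc.firstHit_one_of_eq hsub (hsub.symm ▸ hk)]
  · rw [hodd]
    split_ifs
    exacts [hc.isIntegral_firstHit _ _, zero_mem _]

end IsPendantCycle

end PendantCycle

theorem eq_and_eq_one_or_eq_two_of_isIntegral_inv_add_inv {a b : ℕ} (ha : a ≠ 0) (hb : b ≠ 0)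
    (h : IsIntegral ℤ ((a : ℂ)⁻¹ + (b : ℂ)⁻¹)) : a = b ∧ (a = 1 ∨ a = 2) := by
  have hcast : ((a : ℂ)⁻¹ + (b : ℂ)⁻¹) = algebraMap ℚ ℂ ((a : ℚ)⁻¹ + (b : ℚ)⁻¹) := by simp
  rw [hcast, isIntegral_algebraMap_iff (algebraMap ℚ ℂ).injective,
    IsIntegrallyClosed.isIntegral_iff] at h
  obtain ⟨z, hz : (z : ℚ) = _⟩ := h
  have hmul : z * (a * b) = a + b := by
    have : (z : ℚ) * (a * b) = a + b := by rw [hz]; field_simp; ring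
    exact_mod_cast this
  have hab : (a : ℤ) ∣ b :=
    (Int.dvd_add_right (dvd_refl (a : ℤ))).mp ⟨z * b, by linear_combination -hmul⟩
  have hba : (b : ℤ) ∣ a :=
    (Int.dvd_add_left (dvd_refl (b : ℤ))).mp ⟨z * a, by linear_combination -hmul⟩
  obtain rfl : a = b :=
    Nat.dvd_antisymm (Int.natCast_dvd_natCast.mp hab) (Int.natCast_dvd_natCast.mp hba)
  have htwo : (2 : ℤ) = a * z :=
    mul_left_cancel₀ (Nat.cast_ne_zero.mpr ha) (by linear_combination -hmul)
  exact ⟨rfl, (Nat.dvd_prime Nat.prime_two).mp (Int.natCast_dvd_natCast.mp ⟨z, htwo⟩)⟩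

theorem degree_next_general [Fintype V] {G : SimpleGraph V} {k : ℕ} {c : ZMod k → V}
    (hc : IsPendantCycle G c) (hk : Odd k) (hT : (G.deleteEdges {s(c 0, c (-1))}).IsAcyclic)
    (hdeg : G.degree (c 0) = 4) (hper : IsPeriodic G) {t : ℕ} {v w : ℕ → V}
    (hv : IsBranch G (c 0) (Set.range c)ᶜ t v) (hw : IsBranch G (c 0) (Set.range c)ᶜ t w)
    (hvw : v 1 ≠ w 1) :
    G.degree (v (t + 1)) = G.degree (w (t + 1)) ∧
      (G.degree (v (t + 1)) = 1 ∨ G.degree (v (t + 1)) = 2) := by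
  have : Nonempty V := ⟨c 0⟩
  obtain ⟨T, hle, -, hT⟩ := SimpleGraph.connected_top.exists_isTree_le_of_le_of_isAcyclic le_top hT
  have hB := hc.isPendantForest hT hle
  have hint := hc.isIntegral_coeff_firstReturnSeries hk hT hle hper hdeg hv.adj_one hw.adj_one
    hv.one_mem hw.one_mem hvw (2 * t + 1 + 1)
  rw [hc.coeff_succ_firstReturnSeries hdeg hv.adj_one hw.adj_one hv.one_mem hw.one_mem hvw,
    hv.firstHit_one hB, hw.firstHit_one hB] at hint
  refine eq_and_eq_one_or_eq_two_of_isIntegral_inv_add_inv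
    (hv.adj t t.lt_succ_self).degree_pos_right.ne' (hw.adj t t.lt_succ_self).degree_pos_right.ne' ?_
  have hsum := ((hint.sub (hc.isIntegral_firstHit (2 * t + 1) 1)).sub
    (isIntegral_natCast (halfLineHit (2 * t + 1) 1))).add isIntegral_one
  refine (congrArg (IsIntegral ℤ) ?_).mp hsum
  ring

/-- In the cycle-plus-tree setting, if `G` is periodic and
`deg v₁ = … = deg v_t = deg w₁ = … = deg w_t = 2`, then `deg v_(t+1) = deg w_(t+1)` and this
common degree is `1` or `2`. -/
theorem degree_next {V : Type*} [Fintype V] [DecidableEq V] (G : SimpleGraph V)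
    (hconn : G.Connected) (k : ℕ) [NeZero k] (hk3 : 3 ≤ k) (hkodd : Odd k)
    (c : ZMod k → V) (hcinj : Function.Injective c)
    (hcadj : ∀ i : ZMod k, G.Adj (c i) (c (i + 1)))
    (hcard : Fintype.card V = G.edgeFinset.card)
    (hdegu : G.degree (c 0) = 4) (hdegc : ∀ i : ZMod k, i ≠ 0 → G.degree (c i) = 2)
    (hper : IsPeriodic G)
    (t : ℕ) (ht : 1 ≤ t)
    (v w : ℕ → V) (hv0 : v 0 = c 0) (hw0 : w 0 = c 0)
    (hvadj : ∀ s : ℕ, s < (t + 1) → G.Adj (v s) (v (s + 1)))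
    (hwadj : ∀ s : ℕ, s < (t + 1) → G.Adj (w s) (w (s + 1)))
    (hv1 : v 1 ∉ Set.range c) (hw1 : w 1 ∉ Set.range c) (hvw : v 1 ≠ w 1)
    (hvnb : ∀ s : ℕ, s + 2 ≤ (t + 1) → v (s + 2) ≠ v s)
    (hwnb : ∀ s : ℕ, s + 2 ≤ (t + 1) → w (s + 2) ≠ w s)
    (hvdeg : ∀ s : ℕ, 1 ≤ s → s ≤ t → G.degree (v s) = 2)
    (hwdeg : ∀ s : ℕ, 1 ≤ s → s ≤ t → G.degree (w s) = 2) :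
    G.degree (v (t + 1)) = G.degree (w (t + 1)) ∧
      (G.degree (v (t + 1)) = 1 ∨ G.degree (v (t + 1)) = 2) := by
  have hc : IsPendantCycle G c := ⟨hk3, hcinj, hcadj, hdegc⟩
  have hcard' : Nat.card G.edgeSet = Nat.card V := by
    rw [Nat.card_eq_fintype_card, Nat.card_eq_fintype_card, hcard, SimpleGraph.edgeFinset_card]
  have hT := isAcyclic_deleteEdges_of_not_isBridge hconn hcard' (by simpa using (hcadj (-1)).symm)
    (not_isBridge_of_forall_adj hk3 hcinj hcadj)
  exact degree_next_general hc hkodd hT hdegu hper ⟨hv0, hvadj, hv1, hvnb, hvdeg⟩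
    ⟨hw0, hwadj, hw1, hwnb, hwdeg⟩ hvw

end GroverPaper
end
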